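/- arXiv:1409.2289 — 3 statements merged into one kernel-verified Lean document; each statement's English description precedes it below -/
import Mathlib

section
/- Let d ≥ 1 and k ≥ 0 be integers and let u₀ : ℝ^d → ℝ satisfy ∫ |u₀(x)| (1 + |x|^{k+1}) dx < ∞. Let u(x,t) := (G(·,t) * u₀)(x) and let u_k be the heat-kernel derivative approximation of order k built from u₀. For each multi-index α with |α| = k+1 set F_α(x) := (−1)^{|α|} ∫₀¹ (k+1) (1−t)^k t^{−d−|α|} (x^α / α!) u₀(x/t) dt. Then for every t > 0 and every x ∈ ℝ^d, u(x,t) − u_k(x,t) = Σ_{|α| = k+1} (D^α_x G(·,t) * F_α)(x). -/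
open MeasureTheory Real Filter

noncomputable section

/-- Partial derivative in the `i`-th coordinate direction on `ℝ^d`. -/
def pd (d : ℕ) (i : Fin d) (f : EuclideanSpace ℝ (Fin d) → ℝ) :
    EuclideanSpace ℝ (Fin d) → ℝ :=
  fun x => fderiv ℝ f x (EuclideanSpace.single i 1)

/-- Mixed partial derivative `D^α = ∂₁^{α₁} ⋯ ∂_d^{α_d}`. -/
def Dmul (d : ℕ) (α : Fin d → ℕ) (f : EuclideanSpace ℝ (Fin d) → ℝ) :
    EuclideanSpace ℝ (Fin d) → ℝ :=
  ((List.finRange d).map (fun i => (pd d i)^[α i])).foldr (· ∘ ·) id f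

/-- Heat kernel `G(x,t) = (4πt)^{-d/2} exp(-|x|²/(4t))` on `ℝ^d`. -/
def heatKernel (d : ℕ) (x : EuclideanSpace ℝ (Fin d)) (t : ℝ) : ℝ :=
  (4 * π * t) ^ (-(d : ℝ) / 2) * Real.exp (-‖x‖ ^ 2 / (4 * t))

/-- The heat-kernel derivative approximation of order `k` built from `u₀`. -/
def heatApprox (d k : ℕ) (u₀ : EuclideanSpace ℝ (Fin d) → ℝ)
    (x : EuclideanSpace ℝ (Fin d)) (t : ℝ) : ℝ :=
  ∑ j ∈ Finset.range (k + 1), ∑ α ∈ Finset.Nat.antidiagonalTuple d j,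
    ((-1 : ℝ) ^ (∑ i, α i) / ∏ i, ((α i).factorial : ℝ)) *
      (∫ y, (∏ i, y i ^ α i) * u₀ y) * Dmul d α (fun z => heatKernel d z t) x

/-- The remainder function `F_α`. Here `k` should satisfy `|α| = k+1`. -/
def Falpha (d k : ℕ) (α : Fin d → ℕ) (f : EuclideanSpace ℝ (Fin d) → ℝ)
    (x : EuclideanSpace ℝ (Fin d)) : ℝ :=
  (-1 : ℝ) ^ (∑ i, α i) * ∫ t in (0:ℝ)..1,
    ((k : ℝ) + 1) * (1 - t) ^ k / t ^ (d + ∑ i, α i) *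
      ((∏ i, x i ^ α i) / ∏ i, ((α i).factorial : ℝ)) * f (t⁻¹ • x)

/-- Physicists' Hermite polynomial `H_n(x) = (-1)^n e^{x²} (d/dx)^n e^{-x²}`. -/
def hPoly (n : ℕ) (x : ℝ) : ℝ :=
  (-1 : ℝ) ^ n * Real.exp (x ^ 2) * iteratedDeriv n (fun y => Real.exp (-y ^ 2)) x

/-!
Taylor's formula with integral remainder expands `y ↦ g (x - y)` in powers of `y`, with
coefficients `(-1)^|α| / α! • D^α g x`. Integrated against `u₀`, the terms of order at most `k`
produce the moments of `u₀`, hence the approximation of order `k`. In the remainder, the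
derivatives `D^α g` with `|α| = k + 1` are evaluated at `x - s • y`; Fubini's theorem and the
substitution `z = s • y`, for fixed `s`, turn it into the convolution of `D^α g` with `F_α`. This
requires these `D^α g` to be bounded, which holds for the heat kernel because each of its
derivatives is a Gaussian times a function of temperate growth.
-/

open scoped ContDiff

section PartialDerivatives

variable {d : ℕ} {f : EuclideanSpace ℝ (Fin d) → ℝ}

lemma fderiv_apply_eq_sum_pd (f : EuclideanSpace ℝ (Fin d) → ℝ) (x y : EuclideanSpace ℝ (Fin d)) :
    fderiv ℝ f x y = ∑ i, y i * pd d i f x := by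
  conv_lhs => rw [← (EuclideanSpace.basisFun (Fin d) ℝ).sum_repr y]
  simp [pd]

lemma contDiff_pd {n : ℕ∞ω} (hf : ContDiff ℝ (n + 1) f) (i : Fin d) : ContDiff ℝ n (pd d i f) :=
  (hf.fderiv_right le_rfl).clm_apply contDiff_const

lemma pd_comm (hf : ContDiff ℝ 2 f) (i j : Fin d) : pd d i (pd d j f) = pd d j (pd d i f) := by
  have hf' : Differentiable ℝ (fderiv ℝ f) :=
    (hf.fderiv_right (m := 1) le_rfl).differentiable one_ne_zero
  have pd_pd (a b : Fin d) (x : EuclideanSpace ℝ (Fin d)) : pd d a (pd d b f) x =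
      fderiv ℝ (fderiv ℝ f) x (EuclideanSpace.single a 1) (EuclideanSpace.single b 1) := by
    change fderiv ℝ (fun z => fderiv ℝ f z (EuclideanSpace.single b 1)) x _ = _
    simp [fderiv_clm_apply (hf' x) (differentiableAt_const _)]
  funext x
  rw [pd_pd, pd_pd]
  exact hf.contDiffAt.isSymmSndFDerivAt (by simp) _ _

lemma contDiff_foldr_pd {n : ℕ∞ω} (l : List (Fin d)) (hf : ContDiff ℝ (n + l.length) f) :
    ContDiff ℝ n (l.foldr (pd d) f) := by
  induction l generalizing n with
  | nil => simpa using hf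
  | cons i l ih =>
    refine contDiff_pd (ih ?_) i
    rwa [add_assoc, add_comm 1, ← Nat.cast_succ]

lemma foldr_pd_eq_of_perm {l l' : List (Fin d)} (h : l.Perm l')
    (hf : ContDiff ℝ l.length f) :
    l.foldr (pd d) f = l'.foldr (pd d) f := by
  induction h with
  | nil => rfl
  | cons i _ ih => exact congrArg (pd d i) (ih (hf.of_le (by simp)))
  | swap i j l =>
    refine pd_comm (contDiff_foldr_pd l (hf.of_le ?_)) j i
    simp [add_comm (2 : ℕ∞ω), add_assoc, one_add_one_eq_two]
  | trans h₁ _ ih₁ ih₂ => exact (ih₁ hf).trans (ih₂ (h₁.length_eq ▸ hf))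

/-- The list containing each index `i` exactly `α i` times, in increasing order. The mixed partial
derivative `D^α` is the composition of the partial derivatives along it, so that the symmetry of
derivatives becomes invariance under permutations of lists. -/
def multiIndexList (α : Fin d → ℕ) : List (Fin d) :=
  (List.finRange d).flatMap fun i => List.replicate (α i) i

lemma count_multiIndexList (α : Fin d → ℕ) (i : Fin d) : (multiIndexList α).count i = α i := by
  simp [multiIndexList, List.count_flatMap, List.count_replicate, Function.comp_def,
    ← List.ofFn_eq_map, List.sum_ofFn]

lemma length_multiIndexList (α : Fin d → ℕ) : (multiIndexList α).length = ∑ i, α i := by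
  simp [multiIndexList, List.length_flatMap, ← List.ofFn_eq_map, List.sum_ofFn]

lemma Dmul_eq_foldr_pd (α : Fin d → ℕ) (f : EuclideanSpace ℝ (Fin d) → ℝ) :
    Dmul d α f = (multiIndexList α).foldr (pd d) f := by
  simp only [Dmul, multiIndexList]
  induction List.finRange d with
  | nil => rfl
  | cons i l ih =>
    have foldr_replicate (n : ℕ) (h : EuclideanSpace ℝ (Fin d) → ℝ) :
        (List.replicate n i).foldr (pd d) h = (pd d i)^[n] h := by
      induction n with
      | zero => rfl
      | succ n ihn => rw [List.replicate_succ, List.foldr_cons, ihn, Function.iterate_succ_apply']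
    rw [List.flatMap_cons, List.foldr_append, ← ih, foldr_replicate]
    rfl

lemma Dmul_zero (f : EuclideanSpace ℝ (Fin d) → ℝ) : Dmul d 0 f = f := by
  have hnil : multiIndexList (0 : Fin d → ℕ) = [] :=
    List.eq_nil_of_length_eq_zero (by simp [length_multiIndexList])
  rw [Dmul_eq_foldr_pd, hnil, List.foldr_nil]

lemma contDiff_Dmul {n : ℕ∞ω} (α : Fin d → ℕ) (hf : ContDiff ℝ (n + (∑ i, α i : ℕ)) f) :
    ContDiff ℝ n (Dmul d α f) := by
  rw [Dmul_eq_foldr_pd]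
  exact contDiff_foldr_pd _ (by rwa [length_multiIndexList])

lemma continuous_Dmul (α : Fin d → ℕ) (hf : ContDiff ℝ (∑ i, α i : ℕ) f) :
    Continuous (Dmul d α f) :=
  (contDiff_Dmul (n := 0) α (by rwa [zero_add])).continuous

lemma pd_Dmul (i : Fin d) (α : Fin d → ℕ) (hf : ContDiff ℝ (∑ j, α j + 1 : ℕ) f) :
    pd d i (Dmul d α f) = Dmul d (α + Pi.single i 1) f := by
  have hperm : (i :: multiIndexList α).Perm (multiIndexList (α + Pi.single i 1)) := by
    rw [List.perm_iff_count]
    intro j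
    rcases eq_or_ne j i with rfl | hj
    · simp [count_multiIndexList]
    · simp [count_multiIndexList, hj, hj.symm]
  rw [Dmul_eq_foldr_pd, Dmul_eq_foldr_pd,
    ← foldr_pd_eq_of_perm hperm (by rwa [List.length_cons, length_multiIndexList])]
  rfl

end PartialDerivatives

section Taylor

open Finset Nat

variable {d : ℕ}

lemma sum_antidiagonalTuple_smul_add_single {M : Type*} [AddCommMonoid M] (n : ℕ)
    (F : (Fin d → ℕ) → M) (i : Fin d) :
    ∑ α ∈ antidiagonalTuple d n, (α i + 1) • F (α + Pi.single i 1) =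
      ∑ β ∈ antidiagonalTuple d (n + 1), β i • F β := by
  refine sum_of_injOn (· + Pi.single i 1) (add_left_injective _).injOn ?_ ?_ ?_
  · intro α hα
    simp_all [mem_antidiagonalTuple, sum_add_distrib]
  · intro β hβ hnot
    rcases Nat.eq_zero_or_pos (β i) with h0 | hpos
    · simp [h0]
    · have hle : Pi.single i 1 ≤ β := update_le_iff.mpr ⟨hpos, fun _ _ => zero_le⟩
      refine absurd ⟨β - Pi.single i 1, ?_, tsub_add_cancel_of_le hle⟩ hnot
      rw [mem_antidiagonalTuple] at hβ
      rw [mem_coe, mem_antidiagonalTuple]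
      rw [← tsub_add_cancel_of_le hle] at hβ
      simp only [Pi.add_apply, sum_add_distrib, sum_pi_single', mem_univ, if_true] at hβ
      exact Nat.add_right_cancel hβ
  · simp

lemma sum_sum_antidiagonalTuple_smul_add_single {M : Type*} [AddCommMonoid M] (n : ℕ)
    (F : (Fin d → ℕ) → M) :
    ∑ i, ∑ α ∈ antidiagonalTuple d n, (α i + 1) • F (α + Pi.single i 1) =
      (n + 1) • ∑ β ∈ antidiagonalTuple d (n + 1), F β := by
  simp_rw [sum_antidiagonalTuple_smul_add_single]
  rw [sum_comm, smul_sum]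
  refine sum_congr rfl fun β hβ => ?_
  rw [← sum_smul, mem_antidiagonalTuple.mp hβ]

/-- The normalised monomial `y^α / α!` of the multivariable Taylor formula. -/
def monomialDivFactorial (α : Fin d → ℕ) (y : EuclideanSpace ℝ (Fin d)) : ℝ :=
  (∏ i, y i ^ α i) / ∏ i, ((α i)! : ℝ)

lemma smul_monomialDivFactorial_add_single (α : Fin d → ℕ) (i : Fin d)
    (y : EuclideanSpace ℝ (Fin d)) :
    (α i + 1) • monomialDivFactorial (α + Pi.single i 1) y = y i * monomialDivFactorial α y := by
  have hne : ∀ j ∈ univ.erase i, (α + (Pi.single i 1 : Fin d → ℕ)) j = α j := fun j hj => by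
    simp [ne_of_mem_erase hj]
  simp_rw [monomialDivFactorial, ← prod_div_distrib]
  rw [← mul_prod_erase univ _ (mem_univ i), ← mul_prod_erase univ _ (mem_univ i),
    prod_congr rfl fun j hj => by rw [hne j hj]]
  simp only [Pi.add_apply, Pi.single_eq_same, factorial_succ, nsmul_eq_mul]
  push_cast
  field_simp
  ring

lemma monomialDivFactorial_smul (α : Fin d → ℕ) (c : ℝ) (y : EuclideanSpace ℝ (Fin d)) :
    monomialDivFactorial α (c • y) = c ^ (∑ i, α i) * monomialDivFactorial α y := by
  simp [monomialDivFactorial, mul_pow, prod_mul_distrib, prod_pow_eq_pow_sum, mul_div_assoc]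

lemma monomialDivFactorial_neg (α : Fin d → ℕ) (y : EuclideanSpace ℝ (Fin d)) :
    monomialDivFactorial α (-y) = (-1) ^ (∑ i, α i) * monomialDivFactorial α y := by
  rw [← monomialDivFactorial_smul, neg_one_smul]

lemma sum_monomialDivFactorial_mul_fderiv_Dmul {f : EuclideanSpace ℝ (Fin d) → ℝ} {n : ℕ}
    (hf : ContDiff ℝ (n + 1 : ℕ) f) (x y : EuclideanSpace ℝ (Fin d)) :
    ∑ α ∈ antidiagonalTuple d n, monomialDivFactorial α y * fderiv ℝ (Dmul d α f) x y =
      (n + 1) * ∑ β ∈ antidiagonalTuple d (n + 1), monomialDivFactorial β y * Dmul d β f x := by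
  calc ∑ α ∈ antidiagonalTuple d n, monomialDivFactorial α y * fderiv ℝ (Dmul d α f) x y
    _ = ∑ i, ∑ α ∈ antidiagonalTuple d n, (α i + 1) •
          (monomialDivFactorial (α + Pi.single i 1) y * Dmul d (α + Pi.single i 1) f x) := by
      rw [sum_comm]
      refine sum_congr rfl fun α hα => ?_
      rw [fderiv_apply_eq_sum_pd, mul_sum]
      refine sum_congr rfl fun i _ => ?_
      rw [pd_Dmul i α (by rwa [mem_antidiagonalTuple.mp hα]), ← smul_mul_assoc,
        smul_monomialDivFactorial_add_single]
      ring
    _ = (n + 1) * ∑ β ∈ antidiagonalTuple d (n + 1), monomialDivFactorial β y * Dmul d β f x := by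
      rw [sum_sum_antidiagonalTuple_smul_add_single n
        fun β => monomialDivFactorial β y * Dmul d β f x, nsmul_eq_mul, Nat.cast_succ]

lemma iteratedFDeriv_apply_const_eq_sum_Dmul {f : EuclideanSpace ℝ (Fin d) → ℝ} {n : ℕ}
    (hf : ContDiff ℝ n f) (x y : EuclideanSpace ℝ (Fin d)) :
    iteratedFDeriv ℝ n f x (fun _ => y) =
      n ! * ∑ α ∈ antidiagonalTuple d n, monomialDivFactorial α y * Dmul d α f x := by
  induction n generalizing x with
  | zero => simp [monomialDivFactorial, Dmul_zero, antidiagonalTuple_zero_right]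
  | succ n ih =>
    have hDmul {α} (hα : α ∈ antidiagonalTuple d n) : DifferentiableAt ℝ (Dmul d α f) x := by
      rw [Nat.cast_succ, add_comm, ← mem_antidiagonalTuple.mp hα] at hf
      exact (contDiff_Dmul α hf).differentiable one_ne_zero x
    have hdiff : DifferentiableAt ℝ (iteratedFDeriv ℝ n f) x :=
      hf.differentiable_iteratedFDeriv (by exact_mod_cast n.lt_succ_self) x
    calc iteratedFDeriv ℝ (n + 1) f x (fun _ => y)
      _ = fderiv ℝ (fun z => iteratedFDeriv ℝ n f z (fun _ => y)) x y :=
        hdiff.iteratedFDeriv_succ_apply_left'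
      _ = fderiv ℝ (fun z => n ! * ∑ α ∈ antidiagonalTuple d n,
            monomialDivFactorial α y * Dmul d α f z) x y := by
        simp_rw [ih (hf.of_le (by simp))]
      _ = n ! * ∑ α ∈ antidiagonalTuple d n,
            monomialDivFactorial α y * fderiv ℝ (Dmul d α f) x y := by
        have hsum := HasFDerivAt.fun_sum fun α (hα : α ∈ antidiagonalTuple d n) =>
          (hDmul hα).hasFDerivAt.const_mul (monomialDivFactorial α y)
        simp [(hsum.const_mul (n ! : ℝ)).fderiv]
      _ = (n + 1)! * ∑ β ∈ antidiagonalTuple d (n + 1),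
            monomialDivFactorial β y * Dmul d β f x := by
        rw [sum_monomialDivFactorial_mul_fderiv_Dmul hf, factorial_succ]
        push_cast
        ring

/-- The integrand at `s ∈ [0, 1]` of the part with multi-index `α` of the order-`k` Taylor remainder
of a function at `x` with increment `y`. The argument `D` stands for the derivative `D^α` of that
function, and `|α| = k + 1` is intended. -/
def taylorRemainder (k : ℕ) (α : Fin d → ℕ) (D : EuclideanSpace ℝ (Fin d) → ℝ)
    (x : EuclideanSpace ℝ (Fin d)) (s : ℝ) (y : EuclideanSpace ℝ (Fin d)) : ℝ :=
  (k + 1) * (1 - s) ^ k * (monomialDivFactorial α y * D (x + s • y))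

lemma map_add_eq_sum_Dmul_add_integral_taylorRemainder {f : EuclideanSpace ℝ (Fin d) → ℝ} {k : ℕ}
    (hf : ContDiff ℝ (k + 1 : ℕ) f) (x y : EuclideanSpace ℝ (Fin d)) :
    f (x + y) =
      (∑ j ∈ range (k + 1), ∑ α ∈ antidiagonalTuple d j,
        monomialDivFactorial α y * Dmul d α f x) +
      ∑ α ∈ antidiagonalTuple d (k + 1),
        ∫ s in (0 : ℝ)..1, taylorRemainder k α (Dmul d α f) x s y := by
  have hcont {α} (hα : α ∈ antidiagonalTuple d (k + 1)) : Continuous (Dmul d α f) :=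
    continuous_Dmul α (by rwa [mem_antidiagonalTuple.mp hα])
  rw [map_add_eq_sum_add_integral_iteratedFDeriv (n := k) fun t _ => hf.contDiffAt]
  congr 1
  · refine sum_congr rfl fun j hj => ?_
    have hfj : ContDiff ℝ j f := hf.of_le (by exact_mod_cast (mem_range.mp hj).le)
    rw [iteratedFDeriv_apply_const_eq_sum_Dmul hfj, smul_eq_mul,
      inv_mul_cancel_left₀ (by positivity)]
  · rw [← intervalIntegral.integral_finsetSum fun α hα => ?_, ← intervalIntegral.integral_smul]
    · refine intervalIntegral.integral_congr fun s _ => ?_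
      simp only [iteratedFDeriv_apply_const_eq_sum_Dmul hf, factorial_succ, smul_eq_mul,
        taylorRemainder, ← mul_sum]
      push_cast
      field_simp
    · have := hcont hα
      refine Continuous.intervalIntegrable ?_ _ _
      unfold taylorRemainder
      fun_prop

end Taylor

section Dilation

open Module

variable {E F : Type*} [NormedAddCommGroup E] [NormedSpace ℝ E] [FiniteDimensional ℝ E]
  [MeasurableSpace E] [BorelSpace E] {μ : Measure E} [μ.IsAddHaarMeasure]
  [NormedAddCommGroup F] [NormedSpace ℝ F] {ν : Measure ℝ}

lemma quasiMeasurePreserving_prodMk_inv_smul (hν : ∀ᵐ s ∂ν, s ≠ 0) :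
    Measure.QuasiMeasurePreserving (fun p : ℝ × E => (p.1, p.1⁻¹ • p.2)) (ν.prod μ) (ν.prod μ) := by
  have hmeas : Measurable fun p : ℝ × E => (p.1, p.1⁻¹ • p.2) := by fun_prop
  refine ⟨hmeas, Measure.AbsolutelyContinuous.mk fun S hS h0 => ?_⟩
  rw [Measure.map_apply hmeas hS, Measure.measure_prod_null (hmeas hS)]
  filter_upwards [hν, (Measure.measure_prod_null hS).mp h0] with s hs hSs
  exact (Measure.quasiMeasurePreserving_smul μ (inv_ne_zero hs)).preimage_null hSs

lemma integrable_smul_comp_inv_smul (hν : ∀ᵐ s ∂ν, s ≠ 0) {K : ℝ → E → F}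
    (hK : Integrable (Function.uncurry K) (ν.prod μ)) :
    Integrable (fun p : ℝ × E => |p.1 ^ finrank ℝ E|⁻¹ • K p.1 (p.1⁻¹ • p.2)) (ν.prod μ) := by
  have hmeas : AEStronglyMeasurable
      (fun p : ℝ × E => |p.1 ^ finrank ℝ E|⁻¹ • K p.1 (p.1⁻¹ • p.2)) (ν.prod μ) := by
    refine AEStronglyMeasurable.smul ?_
      (hK.1.comp_quasiMeasurePreserving (quasiMeasurePreserving_prodMk_inv_smul hν))
    exact (by fun_prop : Measurable _).aestronglyMeasurable
  rw [integrable_prod_iff hmeas]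
  obtain ⟨hslice, hnorm⟩ := (integrable_prod_iff hK.1).mp hK
  constructor
  · filter_upwards [hν, hslice] with s hs hKs
    exact ((integrable_comp_smul_iff μ _ (inv_ne_zero hs)).mpr hKs).smul _
  · refine hnorm.congr ?_
    filter_upwards [hν] with s hs
    simp [norm_smul, integral_const_mul, Measure.integral_comp_inv_smul μ (fun y => ‖K s y‖), hs]

lemma integral_integral_smul_comp_inv_smul [SFinite ν] (hν : ∀ᵐ s ∂ν, s ≠ 0) {K : ℝ → E → F}
    (hK : Integrable (Function.uncurry K) (ν.prod μ)) :
    ∫ z, ∫ s, |s ^ finrank ℝ E|⁻¹ • K s (s⁻¹ • z) ∂ν ∂μ = ∫ y, ∫ s, K s y ∂ν ∂μ := by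
  rw [← integral_integral_swap (integrable_smul_comp_inv_smul hν hK), ← integral_integral_swap hK]
  refine integral_congr_ae ?_
  filter_upwards [hν] with s hs
  simp [integral_smul, Measure.integral_comp_inv_smul μ (K s), hs]

end Dilation

section Moments

lemma integrable_mul_of_abs_le_norm_pow {E : Type*} [NormedAddCommGroup E] [MeasurableSpace E]
    [BorelSpace E] {μ : Measure E} {u p : E → ℝ} {j m : ℕ}
    (hu : Integrable (fun y => u y * (1 + ‖y‖ ^ m)) μ) (hp : AEStronglyMeasurable p μ)
    (hle : ∀ y, |p y| ≤ ‖y‖ ^ j) (hj : j ≤ m) :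
    Integrable (fun y => p y * u y) μ := by
  have hpos (y : E) : 0 < 1 + ‖y‖ ^ m := by positivity
  have hu_meas : AEStronglyMeasurable u μ := by
    have hinv : Measurable fun y : E => (1 + ‖y‖ ^ m)⁻¹ := by fun_prop
    refine (hu.1.mul hinv.aestronglyMeasurable).congr (ae_of_all _ fun y => ?_)
    exact mul_inv_cancel_right₀ (hpos y).ne' _
  refine hu.mono (hp.mul hu_meas) (ae_of_all _ fun y => ?_)
  have hpow : ‖y‖ ^ j ≤ 1 + ‖y‖ ^ m := by
    rcases le_total ‖y‖ 1 with h | h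
    · exact (pow_le_one₀ (norm_nonneg y) h).trans (le_add_of_nonneg_right (by positivity))
    · exact (pow_le_pow_right₀ h hj).trans (le_add_of_nonneg_left zero_le_one)
  rw [norm_mul, norm_mul, mul_comm, Real.norm_eq_abs (p y), Real.norm_of_nonneg (hpos y).le]
  gcongr
  exact (hle y).trans hpow

variable {d k : ℕ} {α : Fin d → ℕ} {u₀ D : EuclideanSpace ℝ (Fin d) → ℝ}

lemma continuous_monomialDivFactorial (α : Fin d → ℕ) : Continuous (monomialDivFactorial α) := by
  unfold monomialDivFactorial
  fun_prop

lemma abs_monomialDivFactorial_le (α : Fin d → ℕ) (y : EuclideanSpace ℝ (Fin d)) :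
    |monomialDivFactorial α y| ≤ ‖y‖ ^ ∑ i, α i := by
  rw [monomialDivFactorial, ← Finset.prod_div_distrib, Finset.abs_prod,
    ← Finset.prod_pow_eq_pow_sum]
  refine Finset.prod_le_prod (fun _ _ => abs_nonneg _) fun i _ => ?_
  rw [abs_div, Nat.abs_cast, abs_pow]
  have hfact : (1 : ℝ) ≤ (α i).factorial := by exact_mod_cast (α i).factorial_pos
  refine (div_le_self (by positivity) hfact).trans ?_
  gcongr
  exact PiLp.norm_apply_le y i

lemma integrable_monomialDivFactorial_mul {m : ℕ}
    (hu : Integrable (fun y => u₀ y * (1 + ‖y‖ ^ m))) (hα : ∑ i, α i ≤ m) :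
    Integrable (fun y => monomialDivFactorial α y * u₀ y) :=
  integrable_mul_of_abs_le_norm_pow hu (continuous_monomialDivFactorial α).aestronglyMeasurable
    (abs_monomialDivFactorial_le α) hα

lemma integrable_taylorRemainder_mul (k : ℕ) {C : ℝ} (hD : Continuous D) (hC : ∀ z, |D z| ≤ C)
    (hu : Integrable (fun y => monomialDivFactorial α y * u₀ y)) (x : EuclideanSpace ℝ (Fin d)) :
    Integrable (Function.uncurry fun s y => taylorRemainder k α D x s (-y) * u₀ y)
      ((volume.restrict (Set.Ioc 0 1)).prod volume) := by
  have hbdd : ∀ᵐ p ∂(volume.restrict (Set.Ioc (0 : ℝ) 1)).prod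
      (volume : Measure (EuclideanSpace ℝ (Fin d))),
      ‖(-1) ^ (∑ i, α i) * ((k + 1) * (1 - p.1) ^ k) * D (x + p.1 • -p.2)‖ ≤ (k + 1) * C := by
    filter_upwards [Measure.quasiMeasurePreserving_fst.ae (ae_restrict_mem measurableSet_Ioc)]
      with p hp
    have h0 : 0 ≤ 1 - p.1 := sub_nonneg.2 hp.2
    have h1 : (1 - p.1) ^ k ≤ 1 := pow_le_one₀ h0 (by linarith [hp.1])
    have hk : ((k : ℝ) + 1) * (1 - p.1) ^ k ≤ k + 1 := mul_le_of_le_one_right (by positivity) h1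
    rw [Real.norm_eq_abs, abs_mul, abs_mul, abs_neg_one_pow, one_mul, abs_of_nonneg (by positivity)]
    gcongr
    exact hC _
  have hcont : Continuous fun p : ℝ × EuclideanSpace ℝ (Fin d) =>
      (-1) ^ (∑ i, α i) * ((k + 1) * (1 - p.1) ^ k) * D (x + p.1 • -p.2) := by fun_prop
  refine ((hu.comp_snd _).bdd_mul hcont.aestronglyMeasurable hbdd).congr (ae_of_all _ fun p => ?_)
  simp only [Function.uncurry_def, taylorRemainder, monomialDivFactorial_neg]
  ring

lemma mul_Falpha_eq_integral (k : ℕ) (α : Fin d → ℕ) (D u₀ : EuclideanSpace ℝ (Fin d) → ℝ)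
    (x z : EuclideanSpace ℝ (Fin d)) :
    D (x - z) * Falpha d k α u₀ z = ∫ s in Set.Ioc (0 : ℝ) 1,
      |s ^ d|⁻¹ • (taylorRemainder k α D x s (-(s⁻¹ • z)) * u₀ (s⁻¹ • z)) := by
  rw [Falpha, intervalIntegral.integral_of_le zero_le_one, ← integral_const_mul,
    ← integral_const_mul]
  refine setIntegral_congr_fun measurableSet_Ioc fun s hs => ?_
  have hpos : 0 < s := hs.1
  simp only [taylorRemainder, ← smul_neg, smul_inv_smul₀ hpos.ne', monomialDivFactorial_smul,
    monomialDivFactorial_neg, abs_of_pos (pow_pos hpos d), ← sub_eq_add_neg, smul_eq_mul, pow_add,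
    inv_pow]
  rw [monomialDivFactorial]
  field_simp

lemma integral_mul_Falpha {C : ℝ} (hD : Continuous D) (hC : ∀ z, |D z| ≤ C)
    (hu : Integrable (fun y => monomialDivFactorial α y * u₀ y)) (x : EuclideanSpace ℝ (Fin d)) :
    ∫ z, D (x - z) * Falpha d k α u₀ z =
      ∫ y, ∫ s in (0 : ℝ)..1, taylorRemainder k α D x s (-y) * u₀ y := by
  have hne : ∀ᵐ s ∂volume.restrict (Set.Ioc (0 : ℝ) 1), s ≠ 0 := by
    filter_upwards [ae_restrict_mem measurableSet_Ioc] with s hs using hs.1.ne'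
  have hscale := integral_integral_smul_comp_inv_smul hne
    (integrable_taylorRemainder_mul k hD hC hu x)
  rw [finrank_euclideanSpace_fin] at hscale
  simp_rw [mul_Falpha_eq_integral, intervalIntegral.integral_of_le (zero_le_one' ℝ)]
  exact hscale

lemma integral_monomialDivFactorial_mul (α : Fin d → ℕ) (u₀ : EuclideanSpace ℝ (Fin d) → ℝ) :
    ∫ y, monomialDivFactorial α y * u₀ y =
      (∫ y, (∏ i, y i ^ α i) * u₀ y) / ∏ i, ((α i).factorial : ℝ) := by
  simp_rw [monomialDivFactorial, div_mul_eq_mul_div, integral_div]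

end Moments

section HeatKernel

lemma hasTemperateGrowth_fderiv {E F : Type*} [NormedAddCommGroup E] [NormedSpace ℝ E]
    [NormedAddCommGroup F] [NormedSpace ℝ F] {f : E → F} (hf : f.HasTemperateGrowth) :
    (fderiv ℝ f).HasTemperateGrowth := by
  refine ⟨hf.1.fderiv_right (by simp), fun n => ?_⟩
  obtain ⟨k, C, hC⟩ := hf.2 (n + 1)
  exact ⟨k, C, fun x => norm_iteratedFDeriv_fderiv.trans_le (hC x)⟩

lemma one_add_pow_mul_exp_neg_sq_div_le {r a : ℝ} (hr : 0 ≤ r) (ha : 0 < a) (n : ℕ) :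
    (1 + r) ^ n * Real.exp (-r ^ 2 / a) ≤ n.factorial * Real.exp (1 + a / 4) := by
  have hexponent : 1 + r + -r ^ 2 / a ≤ 1 + a / 4 := by
    have hsq : 0 ≤ (r - a / 2) ^ 2 / a := by positivity
    have hexpand : (r - a / 2) ^ 2 / a = a / 4 - r + r ^ 2 / a := by field_simp; ring
    rw [neg_div]
    linarith
  calc (1 + r) ^ n * Real.exp (-r ^ 2 / a)
    _ ≤ n.factorial * Real.exp (1 + r) * Real.exp (-r ^ 2 / a) := by
      gcongr
      rw [← div_le_iff₀' (by positivity)]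
      exact Real.pow_div_factorial_le_exp (1 + r) (by positivity) n
    _ = n.factorial * Real.exp (1 + r + -r ^ 2 / a) := by rw [mul_assoc, Real.exp_add (1 + r)]
    _ ≤ n.factorial * Real.exp (1 + a / 4) := by gcongr

lemma exists_abs_mul_exp_neg_norm_sq_div_le {E : Type*} [NormedAddCommGroup E] [NormedSpace ℝ E]
    {p : E → ℝ} (hp : p.HasTemperateGrowth) {a : ℝ} (ha : 0 < a) :
    ∃ C, ∀ z, |p z * Real.exp (-‖z‖ ^ 2 / a)| ≤ C := by
  obtain ⟨n, C, hC0, hC⟩ := hp.norm_iteratedFDeriv_le_uniform 0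
  refine ⟨C * (n.factorial * Real.exp (1 + a / 4)), fun z => ?_⟩
  have hpz : |p z| ≤ C * (1 + ‖z‖) ^ n := by simpa using hC 0 le_rfl z
  calc |p z * Real.exp (-‖z‖ ^ 2 / a)|
    _ ≤ C * (1 + ‖z‖) ^ n * Real.exp (-‖z‖ ^ 2 / a) := by
      rw [abs_mul, Real.abs_exp]
      gcongr
    _ ≤ C * (n.factorial * Real.exp (1 + a / 4)) := by
      rw [mul_assoc]
      exact mul_le_mul_of_nonneg_left (one_add_pow_mul_exp_neg_sq_div_le (norm_nonneg z) ha n) hC0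

variable {d : ℕ}

lemma pd_mul_exp_neg_norm_sq_div {p : EuclideanSpace ℝ (Fin d) → ℝ} (hp : Differentiable ℝ p)
    (i : Fin d) (a : ℝ) :
    pd d i (fun z => p z * Real.exp (-‖z‖ ^ 2 / a)) =
      fun z => (pd d i p z - 2 / a * z i * p z) * Real.exp (-‖z‖ ^ 2 / a) := by
  funext z
  have hexp := ((hasStrictFDerivAt_norm_sq z).hasFDerivAt.fun_neg.mul_const a⁻¹).exp
  have hmul := (hp z).hasFDerivAt.fun_mul hexp
  simp_rw [← div_eq_mul_inv] at hmul
  simp only [pd, hmul.fderiv, smul_neg, add_apply, neg_apply, smul_apply, coe_innerSL_apply,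
    EuclideanSpace.inner_single_right, ringHom_apply, one_mul, nsmul_eq_mul, Nat.cast_ofNat,
    smul_eq_mul]
  ring

lemma exists_hasTemperateGrowth_pd_eq_mul_exp {p : EuclideanSpace ℝ (Fin d) → ℝ}
    (hp : p.HasTemperateGrowth) (i : Fin d) (a : ℝ) :
    ∃ q : EuclideanSpace ℝ (Fin d) → ℝ, q.HasTemperateGrowth ∧
      pd d i (fun z => p z * Real.exp (-‖z‖ ^ 2 / a)) =
        fun z => q z * Real.exp (-‖z‖ ^ 2 / a) := by
  refine ⟨_, ?_, pd_mul_exp_neg_norm_sq_div (hp.1.differentiable (by simp)) i a⟩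
  have hpd : (pd d i p).HasTemperateGrowth :=
    (ContinuousLinearMap.apply ℝ ℝ (EuclideanSpace.single i (1 : ℝ))).hasTemperateGrowth.comp
      (hasTemperateGrowth_fderiv hp)
  have hcoord : (fun z : EuclideanSpace ℝ (Fin d) => z i).HasTemperateGrowth :=
    (EuclideanSpace.proj i : EuclideanSpace ℝ (Fin d) →L[ℝ] ℝ).hasTemperateGrowth
  fun_prop

lemma exists_hasTemperateGrowth_Dmul_eq_mul_exp {p : EuclideanSpace ℝ (Fin d) → ℝ}
    (hp : p.HasTemperateGrowth) (α : Fin d → ℕ) (a : ℝ) :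
    ∃ q : EuclideanSpace ℝ (Fin d) → ℝ, q.HasTemperateGrowth ∧
      Dmul d α (fun z => p z * Real.exp (-‖z‖ ^ 2 / a)) =
        fun z => q z * Real.exp (-‖z‖ ^ 2 / a) := by
  rw [Dmul_eq_foldr_pd]
  induction multiIndexList α with
  | nil => exact ⟨p, hp, rfl⟩
  | cons i l ih =>
    obtain ⟨q, hq, hl⟩ := ih
    rw [List.foldr_cons, hl]
    exact exists_hasTemperateGrowth_pd_eq_mul_exp hq i a

lemma contDiff_heatKernel {n : ℕ∞ω} (t : ℝ) : ContDiff ℝ n fun z => heatKernel d z t :=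
  contDiff_const.mul (((contDiff_norm_sq ℝ).neg.div_const _).exp)

lemma exists_abs_Dmul_heatKernel_le {t : ℝ} (ht : 0 < t) (α : Fin d → ℕ) :
    ∃ C, ∀ z, |Dmul d α (fun y => heatKernel d y t) z| ≤ C := by
  obtain ⟨q, hq, hDmul⟩ := exists_hasTemperateGrowth_Dmul_eq_mul_exp
    (Function.HasTemperateGrowth.const ((4 * π * t) ^ (-(d : ℝ) / 2))) α (4 * t)
  simp_rw [heatKernel, hDmul]
  exact exists_abs_mul_exp_neg_norm_sq_div_le hq (by positivity)

end HeatKernel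

section Convolution

open Finset

variable {d k : ℕ} {u₀ g : EuclideanSpace ℝ (Fin d) → ℝ}

lemma map_sub_mul_eq_sum_add_integral_taylorRemainder (u₀ : EuclideanSpace ℝ (Fin d) → ℝ)
    (hg : ContDiff ℝ (k + 1 : ℕ) g) (x y : EuclideanSpace ℝ (Fin d)) :
    g (x - y) * u₀ y =
      (∑ j ∈ range (k + 1), ∑ α ∈ Nat.antidiagonalTuple d j,
        (-1) ^ (∑ i, α i) * Dmul d α g x * (monomialDivFactorial α y * u₀ y)) +
      ∑ α ∈ Nat.antidiagonalTuple d (k + 1),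
        ∫ s in (0 : ℝ)..1, taylorRemainder k α (Dmul d α g) x s (-y) * u₀ y := by
  rw [sub_eq_add_neg, map_add_eq_sum_Dmul_add_integral_taylorRemainder hg, add_mul]
  simp only [sum_mul, monomialDivFactorial_neg, intervalIntegral.integral_mul_const]
  congr 1
  refine sum_congr rfl fun j _ => sum_congr rfl fun α _ => ?_
  ring

lemma integral_map_sub_mul_eq_sum_add_integral_taylorRemainder
    (hint : Integrable (fun x => u₀ x * (1 + ‖x‖ ^ (k + 1)))) (hg : ContDiff ℝ (k + 1 : ℕ) g)
    (hbdd : ∀ α ∈ Nat.antidiagonalTuple d (k + 1), ∃ C, ∀ z, |Dmul d α g z| ≤ C)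
    (x : EuclideanSpace ℝ (Fin d)) :
    ∫ y, g (x - y) * u₀ y =
      (∑ j ∈ range (k + 1), ∑ α ∈ Nat.antidiagonalTuple d j,
        ((-1 : ℝ) ^ (∑ i, α i) / ∏ i, ((α i).factorial : ℝ)) *
          (∫ y, (∏ i, y i ^ α i) * u₀ y) * Dmul d α g x) +
      ∑ α ∈ Nat.antidiagonalTuple d (k + 1),
        ∫ y, ∫ s in (0 : ℝ)..1, taylorRemainder k α (Dmul d α g) x s (-y) * u₀ y := by
  have hmoment {j : ℕ} {α : Fin d → ℕ} (hj : j ≤ k + 1) (hα : α ∈ Nat.antidiagonalTuple d j) :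
      Integrable (fun y => monomialDivFactorial α y * u₀ y) :=
    integrable_monomialDivFactorial_mul hint ((Nat.mem_antidiagonalTuple.mp hα).trans_le hj)
  have hlow (j) (hj : j ∈ range (k + 1)) (α) (hα : α ∈ Nat.antidiagonalTuple d j) :
      Integrable fun y => (-1) ^ (∑ i, α i) * Dmul d α g x * (monomialDivFactorial α y * u₀ y) :=
    (hmoment (mem_range.mp hj).le hα).const_mul _
  have hrem (α) (hα : α ∈ Nat.antidiagonalTuple d (k + 1)) : Integrable fun y =>
      ∫ s in (0 : ℝ)..1, taylorRemainder k α (Dmul d α g) x s (-y) * u₀ y := by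
    obtain ⟨C, hC⟩ := hbdd α hα
    have hcont := continuous_Dmul α (by rwa [Nat.mem_antidiagonalTuple.mp hα])
    simp_rw [intervalIntegral.integral_of_le (zero_le_one' ℝ)]
    exact (integrable_taylorRemainder_mul k hcont hC (hmoment le_rfl hα) x).integral_prod_right
  simp_rw [map_sub_mul_eq_sum_add_integral_taylorRemainder u₀ hg]
  rw [integral_add (integrable_finsetSum _ fun j hj => integrable_finsetSum _ (hlow j hj))
      (integrable_finsetSum _ hrem),
    integral_finsetSum _ fun j hj => integrable_finsetSum _ (hlow j hj),
    integral_finsetSum _ hrem]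
  congr 1
  refine sum_congr rfl fun j hj => ?_
  rw [integral_finsetSum _ (hlow j hj)]
  refine sum_congr rfl fun α _ => ?_
  rw [integral_const_mul, integral_monomialDivFactorial_mul]
  ring

end Convolution

theorem stmt_2_general (d k : ℕ) (u₀ : EuclideanSpace ℝ (Fin d) → ℝ)
    (hint : Integrable (fun x => u₀ x * (1 + ‖x‖ ^ (k + 1))))
    (g : EuclideanSpace ℝ (Fin d) → ℝ) (hg : ContDiff ℝ (k + 1 : ℕ) g)
    (hbdd : ∀ α ∈ Finset.Nat.antidiagonalTuple d (k + 1), ∃ C, ∀ z, |Dmul d α g z| ≤ C)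
    (x : EuclideanSpace ℝ (Fin d)) :
    (∫ y, g (x - y) * u₀ y) -
        ∑ j ∈ Finset.range (k + 1), ∑ α ∈ Finset.Nat.antidiagonalTuple d j,
          ((-1 : ℝ) ^ (∑ i, α i) / ∏ i, ((α i).factorial : ℝ)) *
            (∫ y, (∏ i, y i ^ α i) * u₀ y) * Dmul d α g x =
      ∑ α ∈ Finset.Nat.antidiagonalTuple d (k + 1),
        ∫ y, Dmul d α g (x - y) * Falpha d k α u₀ y := by
  rw [integral_map_sub_mul_eq_sum_add_integral_taylorRemainder hint hg hbdd, add_sub_cancel_left]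
  refine Finset.sum_congr rfl fun α hα => ?_
  obtain ⟨C, hC⟩ := hbdd α hα
  rw [Finset.Nat.mem_antidiagonalTuple] at hα
  exact (integral_mul_Falpha (continuous_Dmul α (by rwa [hα])) hC
    (integrable_monomialDivFactorial_mul hint hα.le) x).symm

/-- the error of the heat-kernel derivative approximation is a sum of
convolutions `D^α G(·,t) * F_α` over `|α| = k+1`. -/
theorem stmt_2 (d k : ℕ) (hd : 1 ≤ d) (u₀ : EuclideanSpace ℝ (Fin d) → ℝ)
    (hint : Integrable (fun x => u₀ x * (1 + ‖x‖ ^ (k + 1))))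
    (t : ℝ) (ht : 0 < t) (x : EuclideanSpace ℝ (Fin d)) :
    (∫ y, heatKernel d (x - y) t * u₀ y) - heatApprox d k u₀ x t =
      ∑ α ∈ Finset.Nat.antidiagonalTuple d (k + 1),
        ∫ y, Dmul d α (fun z => heatKernel d z t) (x - y) * Falpha d k α u₀ y :=
  stmt_2_general d k u₀ hint _ (contDiff_heatKernel t)
    (fun α _ => exists_abs_Dmul_heatKernel_le ht α) x

end
end

section
/- Let d ≥ 1, let α ∈ ℕ^d be a multi-index, and let t > 0. Then sup_{x ∈ ℝ^d} |D^α_x G(x,t)| ≤ π^{−d/2} · 2^{−|α|/2 − d} · t^{−(|α|+d)/2} · √(α!) · ∏_{i=1}^d (α_i + 1)^{−1/12}. -/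
open MeasureTheory Real Filter

noncomputable section

/-!
The heat kernel is the product over the coordinates of one-dimensional heat kernels, so
`D^α G` is the product of their derivatives of orders `α j`, and it suffices to treat `d = 1`.
After rescaling, the `n`-th derivative becomes `± h_n` with `h_n(y) = He_n(y) exp(-y²/2)`. By the
three-term recurrence of the Hermite polynomials `He_n`, the Sonin energy
`h_n² + h_{n+1}² / (n+1)` has derivative `-2 y h_{n+1}² / (n+1)`, hence is largest at `y = 0`.
One of `h_n(0)`, `h_{n+1}(0)` vanishes and the other is, up to sign, a double factorial; Wallis'
inequality for double factorials then gives `h_n² ≤ n! / √(n+1)`.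
-/

section Hermite

open Polynomial
open scoped Nat

theorem sq_doubleFactorial_odd_mul_le (m : ℕ) : (2 * m - 1)‼ ^ 2 * (2 * m + 1) ≤ (2 * m)‼ ^ 2 := by
  induction m with
  | zero => simp
  | succ m ih =>
    calc (2 * (m + 1) - 1)‼ ^ 2 * (2 * (m + 1) + 1)
        = (2 * m - 1)‼ ^ 2 * (2 * m + 1) * ((2 * m + 1) * (2 * m + 3)) := by
          rw [show 2 * (m + 1) - 1 = 2 * m + 1 by lia, Nat.doubleFactorial_add_one]
          ring
      _ ≤ (2 * m)‼ ^ 2 * (2 * m + 2) ^ 2 := by gcongr; lia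
      _ = (2 * (m + 1))‼ ^ 2 := by
          rw [show 2 * (m + 1) = 2 * m + 2 by ring, Nat.doubleFactorial_add_two]
          ring

theorem derivative_hermite_succ (n : ℕ) :
    derivative (hermite (n + 1)) = (n + 1 : ℤ[X]) * hermite n := by
  induction n with
  | zero => simp
  | succ n ih =>
    have hderiv : derivative (derivative (hermite (n + 1))) =
        (n + 1 : ℤ[X]) * derivative (hermite n) := by
      rw [ih]
      simp
    rw [hermite_succ (n + 1), derivative_sub, derivative_mul, derivative_X, hderiv, ih,
      hermite_succ n]
    push_cast
    ring

theorem hermite_add_two (n : ℕ) :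
    hermite (n + 2) = X * hermite (n + 1) - (n + 1 : ℤ[X]) * hermite n := by
  rw [hermite_succ, derivative_hermite_succ]

theorem sq_coeff_zero_hermite_le (n : ℕ) :
    ((hermite n).coeff 0 : ℝ) ^ 2 ≤ n ! / √(n + 1) := by
  obtain ⟨m, rfl | rfl⟩ := n.even_or_odd'
  · have hcoeff : ((hermite (2 * m)).coeff 0 : ℝ) ^ 2 = (2 * m - 1)‼ ^ 2 := by
      rw [← add_zero (2 * m), coeff_hermite_explicit]
      simp [mul_pow, ← pow_mul]
    have hfactorial : (2 * m)! = (2 * m)‼ * (2 * m - 1)‼ := by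
      cases m with
      | zero => rfl
      | succ m => exact Nat.factorial_eq_mul_doubleFactorial (2 * m + 1)
    have hwallis : ((2 * m - 1)‼ : ℝ) * √(2 * m + 1) ≤ (2 * m)‼ := by
      rw [← sq_le_sq₀ (by positivity) (by positivity), mul_pow, Real.sq_sqrt (by positivity)]
      exact_mod_cast sq_doubleFactorial_odd_mul_le m
    rw [hcoeff, hfactorial, le_div_iff₀ (by positivity)]
    push_cast
    calc ((2 * m - 1)‼ : ℝ) ^ 2 * √(2 * m + 1)
        = (2 * m - 1)‼ * √(2 * m + 1) * (2 * m - 1)‼ := by ring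
      _ ≤ (2 * m)‼ * (2 * m - 1)‼ := by gcongr
  · rw [coeff_hermite_of_odd_add (by simp), Int.cast_zero, zero_pow two_ne_zero]
    positivity

/-- The `n`-th derivative of the Gaussian `exp (-y² / 2)` up to the sign `(-1) ^ n`, written with
the probabilists' Hermite polynomial. The weight differs from that of the `L²`-orthogonal Hermite
functions, which is `exp (-y² / 4)`. -/
def gaussHermite (n : ℕ) (y : ℝ) : ℝ :=
  aeval y (hermite n) * exp (-(y ^ 2 / 2))

theorem iteratedDeriv_exp_neg_sq_div_two (n : ℕ) (y : ℝ) :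
    iteratedDeriv n (fun z => exp (-(z ^ 2 / 2))) y = (-1) ^ n * gaussHermite n y := by
  rw [iteratedDeriv_eq_iterate, deriv_gaussian_eq_hermite_mul_gaussian, gaussHermite, mul_assoc]

theorem gaussHermite_zero_right (n : ℕ) : gaussHermite n 0 = (hermite n).coeff 0 := by
  simp [gaussHermite, ← coeff_zero_eq_aeval_zero']

theorem gaussHermite_add_two (n : ℕ) (y : ℝ) :
    gaussHermite (n + 2) y = y * gaussHermite (n + 1) y - (n + 1) * gaussHermite n y := by
  simp only [gaussHermite, hermite_add_two, map_sub, map_mul, map_add, map_one, map_natCast,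
    aeval_X]
  ring

theorem hasDerivAt_gaussHermite (n : ℕ) (y : ℝ) :
    HasDerivAt (gaussHermite n) (-gaussHermite (n + 1) y) y := by
  have hexponent : HasDerivAt (fun z : ℝ => -(z ^ 2 / 2)) (-y) y := by
    simpa using ((hasDerivAt_pow 2 y).div_const 2).fun_neg
  refine (((hermite n).hasDerivAt_aeval y).mul hexponent.exp).congr_deriv ?_
  simp only [gaussHermite, hermite_succ, map_sub, map_mul, aeval_X]
  ring

/-- Sonin's energy of the sequence `gaussHermite`. It dominates `gaussHermite n y ^ 2`, and its
weights are chosen so that the mixed terms cancel in its derivative. -/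
def soninEnergy (n : ℕ) (y : ℝ) : ℝ :=
  gaussHermite n y ^ 2 + gaussHermite (n + 1) y ^ 2 / (n + 1)

theorem hasDerivAt_soninEnergy (n : ℕ) (y : ℝ) :
    HasDerivAt (soninEnergy n) (-(2 * y * gaussHermite (n + 1) y ^ 2 / (n + 1))) y := by
  refine (((hasDerivAt_gaussHermite n y).pow 2).add
    (((hasDerivAt_gaussHermite (n + 1) y).pow 2).div_const ((n : ℝ) + 1))).congr_deriv ?_
  rw [gaussHermite_add_two]
  field_simp
  ring

theorem soninEnergy_le_soninEnergy_zero (n : ℕ) (y : ℝ) : soninEnergy n y ≤ soninEnergy n 0 := by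
  have hdiff : Differentiable ℝ (soninEnergy n) := fun z =>
    (hasDerivAt_soninEnergy n z).differentiableAt
  refine isMaxOn_univ_of_deriv (hdiff 0).continuousAt hdiff.differentiableOn
    hdiff.differentiableOn (fun z hz => ?_) (fun z hz => ?_) (Set.mem_univ y)
  all_goals rw [(hasDerivAt_soninEnergy n z).deriv]
  · have hz' : 0 ≤ -z := neg_nonneg.2 (le_of_lt hz)
    calc 0 ≤ 2 * -z * gaussHermite (n + 1) z ^ 2 / (n + 1) := by positivity
      _ = _ := by ring
  · have hz' : 0 ≤ z := le_of_lt hz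
    exact neg_nonpos.2 (by positivity)

theorem soninEnergy_zero_le (n : ℕ) : soninEnergy n 0 ≤ n ! / √(n + 1) := by
  simp only [soninEnergy, gaussHermite_zero_right]
  rcases n.even_or_odd with hn | hn
  · rw [coeff_hermite_of_odd_add (n := n + 1) (by simpa using hn.add_one)]
    simpa using sq_coeff_zero_hermite_le n
  · rw [coeff_hermite_of_odd_add (n := n) (by simpa using hn)]
    calc ((0 : ℤ) : ℝ) ^ 2 + ((hermite (n + 1)).coeff 0 : ℝ) ^ 2 / (n + 1)
        ≤ 0 ^ 2 + (n + 1)! / √((n + 1 : ℕ) + 1) / (n + 1) := by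
          push_cast
          gcongr
          exact_mod_cast sq_coeff_zero_hermite_le (n + 1)
      _ = n ! / √((n + 1 : ℕ) + 1) := by
          rw [Nat.factorial_succ]
          push_cast
          field_simp
          ring
      _ ≤ n ! / √(n + 1) := by
          gcongr
          lia

theorem sq_gaussHermite_le (n : ℕ) (y : ℝ) : gaussHermite n y ^ 2 ≤ n ! / √(n + 1) :=
  calc gaussHermite n y ^ 2
      ≤ soninEnergy n y := le_add_of_nonneg_right (by positivity)
    _ ≤ soninEnergy n 0 := soninEnergy_le_soninEnergy_zero n y
    _ ≤ n ! / √(n + 1) := soninEnergy_zero_le n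

theorem abs_gaussHermite_le (n : ℕ) (y : ℝ) :
    |gaussHermite n y| ≤ √n ! * ((n : ℝ) + 1) ^ (-(1 / 4 : ℝ)) := by
  refine abs_le_of_sq_le_sq ((sq_gaussHermite_le n y).trans_eq ?_) (by positivity)
  rw [mul_pow, Real.sq_sqrt (by positivity), ← Real.rpow_mul_natCast (by positivity),
    Real.sqrt_eq_rpow, div_eq_mul_inv, ← Real.rpow_neg (by positivity)]
  norm_num

end Hermite

section OneDimensional

/-- The heat kernel `(4πt)^{-1/2} exp(-y²/(4t))` on the real line, a factor of the
`d`-dimensional one. -/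
def heatKernelReal (t y : ℝ) : ℝ :=
  (4 * π * t) ^ (-(1 / 2 : ℝ)) * exp (-(y ^ 2 / (4 * t)))

theorem contDiff_heatKernelReal (t : ℝ) {n : WithTop ℕ∞} : ContDiff ℝ n (heatKernelReal t) := by
  unfold heatKernelReal
  fun_prop

theorem iteratedDeriv_heatKernelReal {t : ℝ} (ht : 0 ≤ t) (n : ℕ) (y : ℝ) :
    iteratedDeriv n (heatKernelReal t) y =
      (4 * π * t) ^ (-(1 / 2 : ℝ)) * (-(√(2 * t))⁻¹) ^ n * gaussHermite n ((√(2 * t))⁻¹ * y) := by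
  have hscale : heatKernelReal t = fun y =>
      (4 * π * t) ^ (-(1 / 2 : ℝ)) * exp (-(((√(2 * t))⁻¹ * y) ^ 2 / 2)) := by
    funext y
    rw [heatKernelReal, mul_pow, inv_pow, Real.sq_sqrt (by positivity)]
    congr 3
    ring
  rw [hscale, iteratedDeriv_const_mul_field,
    iteratedDeriv_comp_const_mul (f := fun z => exp (-(z ^ 2 / 2))) (by fun_prop)]
  beta_reduce
  rw [iteratedDeriv_exp_neg_sq_div_two, neg_pow]
  ring

theorem heatKernelReal_prefactor_mul_rpow {t : ℝ} (ht : 0 < t) (s : ℝ) :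
    (4 * π * t) ^ (-(1 / 2 : ℝ)) * (√(2 * t))⁻¹ ^ s =
      π ^ (-(1 / 2 : ℝ)) * 2 ^ (-s / 2 - 1) * t ^ (-(s + 1) / 2) := by
  have hfour : (4 : ℝ) ^ (-(1 / 2 : ℝ)) = 2 ^ (-1 : ℝ) := by
    rw [show (4 : ℝ) = 2 ^ (2 : ℝ) by norm_num, ← Real.rpow_mul two_pos.le]
    norm_num
  have hsqrt : (√(2 * t))⁻¹ ^ s = 2 ^ (-s / 2) * t ^ (-s / 2) := by
    rw [← Real.mul_rpow two_pos.le ht.le, Real.sqrt_eq_rpow, ← Real.rpow_neg (by positivity),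
      ← Real.rpow_mul (by positivity)]
    congr 1
    ring
  rw [hsqrt, Real.mul_rpow (by positivity) ht.le, Real.mul_rpow (by positivity) pi_pos.le, hfour,
    sub_eq_add_neg, Real.rpow_add two_pos, show -(s + 1) / 2 = -s / 2 + -(1 / 2) by ring,
    Real.rpow_add ht]
  ring

theorem abs_iteratedDeriv_heatKernelReal_le {t : ℝ} (ht : 0 < t) (n : ℕ) (y : ℝ) :
    |iteratedDeriv n (heatKernelReal t) y| ≤
      π ^ (-(1 / 2 : ℝ)) * 2 ^ (-(n : ℝ) / 2 - 1) * t ^ (-((n : ℝ) + 1) / 2) *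
        (√n.factorial * ((n : ℝ) + 1) ^ (-(1 / 4 : ℝ))) := by
  rw [iteratedDeriv_heatKernelReal ht.le, abs_mul, abs_mul, abs_of_nonneg (by positivity), abs_pow,
    abs_neg, abs_of_nonneg (by positivity), ← Real.rpow_natCast,
    heatKernelReal_prefactor_mul_rpow ht]
  gcongr
  exact abs_gaussHermite_le n _

end OneDimensional

section SeparatedVariables

open scoped ContDiff

variable {d : ℕ} {f : Fin d → ℝ → ℝ}

theorem pd_prod (hf : ∀ j, Differentiable ℝ (f j)) (i : Fin d) (x : EuclideanSpace ℝ (Fin d)) :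
    pd d i (fun x => ∏ j, f j (x j)) x =
      deriv (f i) (x i) * ∏ j ∈ Finset.univ.erase i, f j (x j) := by
  have hcoord (j : Fin d) : HasFDerivAt (fun x : EuclideanSpace ℝ (Fin d) => f j (x j))
      (deriv (f j) (x j) • (EuclideanSpace.proj j : EuclideanSpace ℝ (Fin d) →L[ℝ] ℝ)) x :=
    HasDerivAt.comp_hasFDerivAt (f := fun x : EuclideanSpace ℝ (Fin d) => x j) x
      (hf j (x j)).hasDerivAt
      (EuclideanSpace.proj j : EuclideanSpace ℝ (Fin d) →L[ℝ] ℝ).hasFDerivAt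
  rw [pd, (HasFDerivAt.finsetProd fun j _ => hcoord j).fderiv]
  simp only [sum_apply, smul_apply, smul_eq_mul, PiLp.proj_apply, PiLp.single_apply]
  rw [Finset.sum_eq_single i (fun j _ hj => by simp [hj]) (by simp), if_pos rfl, mul_one, mul_comm]

theorem pd_prod_iteratedDeriv (hf : ∀ j, ContDiff ℝ ∞ (f j)) (β : Fin d → ℕ) (i : Fin d) :
    pd d i (fun x => ∏ j, iteratedDeriv (β j) (f j) (x j)) =
      fun x => ∏ j, iteratedDeriv ((β + Pi.single i 1 : Fin d → ℕ) j) (f j) (x j) := by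
  funext x
  rw [pd_prod fun j => (hf j).differentiable_iteratedDeriv (β j) (mod_cast WithTop.coe_lt_top _),
    ← Finset.mul_prod_erase _ _ (Finset.mem_univ i), ← iteratedDeriv_succ]
  congr 1
  · simp
  · exact Finset.prod_congr rfl fun j hj => by simp [Finset.ne_of_mem_erase hj]

theorem pd_iterate_prod_iteratedDeriv (hf : ∀ j, ContDiff ℝ ∞ (f j)) (β : Fin d → ℕ) (i : Fin d)
    (k : ℕ) :
    (pd d i)^[k] (fun x => ∏ j, iteratedDeriv (β j) (f j) (x j)) =
      fun x => ∏ j, iteratedDeriv ((β + Pi.single i k : Fin d → ℕ) j) (f j) (x j) := by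
  induction k with
  | zero => simp
  | succ k ih =>
    rw [Function.iterate_succ_apply', ih, pd_prod_iteratedDeriv hf, add_assoc, ← Pi.single_add]

theorem Dmul_prod (hf : ∀ j, ContDiff ℝ ∞ (f j)) (α : Fin d → ℕ) :
    Dmul d α (fun x => ∏ j, f j (x j)) = fun x => ∏ j, iteratedDeriv (α j) (f j) (x j) := by
  have hfold (l : List (Fin d)) :
      (l.map fun i => (pd d i)^[α i]).foldr (· ∘ ·) id (fun x => ∏ j, f j (x j)) =
        fun x => ∏ j, iteratedDeriv ((l.map fun i => Pi.single i (α i)).sum j) (f j) (x j) := by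
    induction l with
    | nil => simp
    | cons i l ih =>
      simp only [List.map_cons, List.foldr_cons, Function.comp_apply, List.sum_cons]
      rw [ih, pd_iterate_prod_iteratedDeriv hf, add_comm]
  have hsum : ((List.finRange d).map fun i => Pi.single i (α i)).sum = α := by
    rw [← List.ofFn_eq_map, List.sum_ofFn, Finset.univ_sum_single]
  rw [Dmul, hfold, hsum]

end SeparatedVariables

theorem heatKernel_eq_prod_heatKernelReal {d : ℕ} {t : ℝ} (ht : 0 ≤ t)
    (x : EuclideanSpace ℝ (Fin d)) : heatKernel d x t = ∏ j, heatKernelReal t (x j) := by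
  simp only [heatKernel, heatKernelReal]
  rw [Finset.prod_mul_distrib, Finset.prod_const, Finset.card_univ, Fintype.card_fin,
    ← Real.rpow_mul_natCast (by positivity), ← Real.exp_sum, EuclideanSpace.real_norm_sq_eq,
    Finset.sum_neg_distrib, ← Finset.sum_div]
  congr 2 <;> ring

theorem Dmul_heatKernel {d : ℕ} (α : Fin d → ℕ) {t : ℝ} (ht : 0 ≤ t)
    (x : EuclideanSpace ℝ (Fin d)) :
    Dmul d α (fun z => heatKernel d z t) x =
      ∏ j, iteratedDeriv (α j) (heatKernelReal t) (x j) := by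
  simp only [heatKernel_eq_prod_heatKernelReal ht]
  rw [Dmul_prod fun _ => contDiff_heatKernelReal t]

theorem stmt_4_general (d : ℕ) (α : Fin d → ℕ) (t : ℝ) (ht : 0 < t)
    (x : EuclideanSpace ℝ (Fin d)) :
    |Dmul d α (fun z => heatKernel d z t) x| ≤
      π ^ (-(d : ℝ) / 2) * 2 ^ (-((∑ i, α i : ℕ) : ℝ) / 2 - d) *
        t ^ (-(((∑ i, α i : ℕ) : ℝ) + d) / 2) *
        Real.sqrt (∏ i, ((α i).factorial : ℝ)) *
        ∏ i, ((α i : ℝ) + 1) ^ (-(1 / 4 : ℝ)) := by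
  rw [Dmul_heatKernel α ht.le, Finset.abs_prod]
  refine (Finset.prod_le_prod (fun _ _ => abs_nonneg _) fun j _ =>
    abs_iteratedDeriv_heatKernelReal_le ht (α j) (x j)).trans_eq ?_
  simp only [Finset.prod_mul_distrib, ← Real.rpow_sum_of_pos pi_pos,
    ← Real.rpow_sum_of_pos two_pos, ← Real.rpow_sum_of_pos ht]
  rw [Real.sqrt_prod _ fun _ _ => by positivity, ← mul_assoc]
  simp only [Finset.sum_sub_distrib, ← Finset.sum_div, Finset.sum_neg_distrib,
    Finset.sum_add_distrib, Finset.sum_const, Finset.card_univ, Fintype.card_fin, nsmul_eq_mul,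
    Nat.cast_sum, mul_one]
  ring_nf

/-- uniform bound on `D^α_x G(x,t)`. -/
theorem stmt_4 (d : ℕ) (hd : 1 ≤ d) (α : Fin d → ℕ) (t : ℝ) (ht : 0 < t)
    (x : EuclideanSpace ℝ (Fin d)) :
    |Dmul d α (fun z => heatKernel d z t) x| ≤
      π ^ (-(d : ℝ) / 2) * 2 ^ (-((∑ i, α i : ℕ) : ℝ) / 2 - d) *
        t ^ (-(((∑ i, α i : ℕ) : ℝ) + d) / 2) *
        Real.sqrt (∏ i, ((α i).factorial : ℝ)) *
        ∏ i, ((α i : ℝ) + 1) ^ (-(1 / 12 : ℝ)) := by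
  refine (stmt_4_general d α t ht x).trans ?_
  gcongr <;> norm_num

end
end

section
/- Let d ≥ 1 and k ≥ 0 be integers and let u₀ : ℝ^d → ℝ satisfy ∫ |u₀(x)| (1 + |x|^{k+1}) dx < ∞. Let u(x,t) := (G(·,t) * u₀)(x). Then for every t > 0 and every x ∈ ℝ^d, | u(x,t) − π^{−d/2} e^{−|x|²/(4t)} Σ_{|α| ≤ k} ( (∫ y^α u₀(y) dy) / α! ) (4t)^{−(|α|+d)/2} ∏_{i=1}^d H_{α_i}(x_i/(2√t)) | ≤ (2π)^{−d/2} (2t)^{−(k+d+1)/2} Σ_{|α| = k+1} ( ‖x^α u₀(x)‖_{L¹} / √(α!) ) ( ∏_{i=1}^d (α_i + 1) )^{−1/12}. -/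
open MeasureTheory Real Filter

noncomputable section

/-! On the imaginary axis `e^ζ` differs from its Taylor polynomial of degree `k` by at most
`|ζ|^(k+1) / (k+1)!`. Insert this, with `ζ = 2i⟨s, w⟩`, in the Fourier representation
`π^(d/2) e^{-|z-w|²} = ∫ e^{-|s|² - 2i⟨s, z⟩} e^{2i⟨s, w⟩} ds`. The multinomial theorem turns the
Taylor polynomial into `∑ w^α/α! ∏ H_{α_i}(z_i) e^{-z_i²}`, and the error into
`∑_{|α| = k+1} |w^α|/α! ∏ A_{α_i}` with the absolute moments `A_n = ∫ |2s|^n e^{-s²} ds`. Since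
`A_{n+2} = 2(n+1) A_n` and `(n+1)(n+3) ≤ (n+2)²`, induction in steps of two gives
`A_n ≤ (π 2^n n!)^{1/2} (n+1)^{-1/4}`. Finally put `z = x/(2√t)`, `w = y/(2√t)` and integrate
against `u₀(y)`. The factor `(n+1)^{-1/4}` is sharper than the `(n+1)^{-1/12}` claimed. -/

section ExpSeries

lemma hasDerivAt_exp_sub_sum (n : ℕ) (z : ℂ) :
    HasDerivAt (fun z : ℂ ↦ Complex.exp z - ∑ j ∈ Finset.range (n + 1), z ^ j / (j.factorial : ℂ))
      (Complex.exp z - ∑ j ∈ Finset.range n, z ^ j / (j.factorial : ℂ)) z := by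
  have hterm (j : ℕ) : HasDerivAt (fun z : ℂ ↦ z ^ (j + 1) / ((j + 1).factorial : ℂ))
      (z ^ j / (j.factorial : ℂ)) z := by
    refine ((hasDerivAt_pow (j + 1) z).div_const _).congr_deriv ?_
    rw [Nat.factorial_succ, add_tsub_cancel_right, Nat.cast_mul,
      mul_div_mul_left _ _ (Nat.cast_ne_zero.mpr j.succ_ne_zero)]
  simp only [Finset.sum_range_succ', pow_zero, Nat.factorial_zero, Nat.cast_one, div_one]
  exact (Complex.hasDerivAt_exp z).sub ((HasDerivAt.fun_sum fun j _ ↦ hterm j).add_const 1)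

lemma norm_exp_sub_sum_le_of_re_nonpos (n : ℕ) {z : ℂ} (hz : z.re ≤ 0) :
    ‖Complex.exp z - ∑ j ∈ Finset.range n, z ^ j / (j.factorial : ℂ)‖ ≤
      ‖z‖ ^ n / (n.factorial : ℝ) := by
  induction n generalizing z with
  | zero => simpa [Complex.norm_exp] using hz
  | succ n ih =>
    have hderiv (x : ℝ) := (hasDerivAt_exp_sub_sum n (x * z)).comp x
      ((Complex.ofRealCLM.hasDerivAt (x := x)).mul_const z)
    have hbound (x : ℝ) : HasDerivAt
        (fun x : ℝ ↦ (x * ‖z‖) ^ (n + 1) / ((n + 1).factorial : ℝ))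
        ((x * ‖z‖) ^ n / (n.factorial : ℝ) * ‖z‖) x := by
      refine ((((hasDerivAt_id x).mul_const ‖z‖).pow (n + 1)).div_const _).congr_deriv ?_
      rw [Nat.factorial_succ]
      push_cast
      simp only [id_eq]
      field_simp
    have hray := image_norm_le_of_norm_deriv_right_le_deriv_boundary (a := 0) (b := 1)
      (fun x _ ↦ (hderiv x).continuousAt.continuousWithinAt)
      (fun x _ ↦ (hderiv x).hasDerivWithinAt) (by simp [Finset.sum_range_succ']) hbound
      (fun x hx ↦ ?_) (Set.right_mem_Icc.mpr zero_le_one)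
    · simpa using hray
    · have hre : ((x : ℂ) * z).re ≤ 0 := by
        simpa using mul_nonpos_of_nonneg_of_nonpos hx.1 hz
      simpa [abs_of_nonneg hx.1] using mul_le_mul_of_nonneg_right (ih hre) (norm_nonneg z)

end ExpSeries

section Multinomial

variable {ι : Type*} [Fintype ι] [DecidableEq ι]

lemma sum_piAntidiag_prod_pow_div_factorial {K : Type*} [Field K] [CharZero K]
    (n : ℕ) (a : ι → K) :
    ∑ α ∈ Finset.piAntidiag Finset.univ n, ∏ i, a i ^ α i / ((α i).factorial : K) =
      (∑ i, a i) ^ n / (n.factorial : K) := by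
  rw [Finset.sum_pow_eq_sum_piAntidiag, Finset.sum_div]
  refine Finset.sum_congr rfl fun α hα ↦ ?_
  have hspec : (∏ i, ((α i).factorial : K)) * (Nat.multinomial Finset.univ α : K) =
      (n.factorial : K) := by
    have h := Nat.multinomial_spec Finset.univ α
    rw [(Finset.mem_piAntidiag.mp hα).1] at h
    exact_mod_cast h
  have hα0 : ∏ i, ((α i).factorial : K) ≠ 0 :=
    Finset.prod_ne_zero_iff.mpr fun i _ ↦ Nat.cast_ne_zero.mpr (α i).factorial_ne_zero
  have hn0 : (n.factorial : K) ≠ 0 := Nat.cast_ne_zero.mpr n.factorial_ne_zero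
  rw [Finset.prod_div_distrib, div_eq_div_iff hα0 hn0, ← hspec]
  ring

/-- The multi-indices `α` of order `|α| ≤ k`, over which Taylor polynomials of degree `k` are
summed. -/
def multiIndicesLE (ι : Type*) [Fintype ι] [DecidableEq ι] (k : ℕ) : Finset (ι → ℕ) :=
  (Finset.range (k + 1)).biUnion (Finset.piAntidiag Finset.univ)

lemma mem_multiIndicesLE {k : ℕ} {α : ι → ℕ} : α ∈ multiIndicesLE ι k ↔ ∑ i, α i ≤ k := by
  simp [multiIndicesLE]

lemma sum_multiIndicesLE {M : Type*} [AddCommMonoid M] (k : ℕ) (g : (ι → ℕ) → M) :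
    ∑ α ∈ multiIndicesLE ι k, g α =
      ∑ j ∈ Finset.range (k + 1), ∑ α ∈ Finset.piAntidiag Finset.univ j, g α := by
  refine Finset.sum_biUnion fun i _ j _ hij ↦ Finset.disjoint_left.mpr fun α hi hj ↦ hij ?_
  rw [← (Finset.mem_piAntidiag.mp hi).1, ← (Finset.mem_piAntidiag.mp hj).1]

end Multinomial

section GaussianMoments

lemma integrable_abs_two_mul_pow_mul_exp_neg_sq (n : ℕ) :
    Integrable fun s : ℝ ↦ |2 * s| ^ n * Real.exp (-s ^ 2) := by
  have h := (integrable_rpow_mul_exp_neg_mul_sq (b := 1) one_pos (s := n)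
    (neg_one_lt_zero.trans_le n.cast_nonneg)).norm.const_mul (2 ^ n)
  simpa [abs_mul, mul_pow, mul_assoc] using h

/-- The absolute moment `∫ |2s|ⁿ e^{-s²} ds`, an upper bound for `√π |Hₙ(z)| e^{-z²}`. -/
def gaussianAbsMoment (n : ℕ) : ℝ := ∫ s : ℝ, |2 * s| ^ n * Real.exp (-s ^ 2)

lemma gaussianAbsMoment_nonneg (n : ℕ) : 0 ≤ gaussianAbsMoment n :=
  integral_nonneg fun s ↦ by positivity

lemma gaussianAbsMoment_eq_Gamma (n : ℕ) :
    gaussianAbsMoment n = 2 ^ n * Real.Gamma (((n : ℝ) + 1) / 2) := by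
  calc gaussianAbsMoment n
      = 2 * ∫ s in Set.Ioi (0 : ℝ), |2 * s| ^ n * Real.exp (-s ^ 2) := by
        rw [← integral_comp_abs (f := fun s ↦ |2 * s| ^ n * Real.exp (-s ^ 2)), gaussianAbsMoment]
        simp only [abs_mul, abs_abs, sq_abs]
    _ = 2 * ∫ s in Set.Ioi (0 : ℝ), 2 ^ n * (s ^ (n : ℝ) * Real.exp (-s ^ (2 : ℝ))) := by
        congr 1
        refine setIntegral_congr_fun measurableSet_Ioi fun s (hs : 0 < s) ↦ ?_
        simp [abs_of_pos hs, mul_pow, mul_assoc]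
    _ = 2 ^ n * Real.Gamma (((n : ℝ) + 1) / 2) := by
        rw [integral_const_mul, integral_rpow_mul_exp_neg_rpow two_pos
          (neg_one_lt_zero.trans_le n.cast_nonneg)]
        ring

lemma gaussianAbsMoment_add_two (n : ℕ) :
    gaussianAbsMoment (n + 2) = 2 * (n + 1) * gaussianAbsMoment n := by
  have h : (((n + 2 : ℕ) : ℝ) + 1) / 2 = ((n : ℝ) + 1) / 2 + 1 := by push_cast; ring
  rw [gaussianAbsMoment_eq_Gamma, gaussianAbsMoment_eq_Gamma, h,
    Real.Gamma_add_one (by positivity)]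
  ring

lemma gaussianAbsMoment_pow_four_mul_le (n : ℕ) :
    gaussianAbsMoment n ^ 4 * (n + 1) ≤ (π * 2 ^ n * n.factorial) ^ 2 := by
  induction n using Nat.twoStepInduction with
  | zero =>
    have h : gaussianAbsMoment 0 = √π := by
      simpa [gaussianAbsMoment_eq_Gamma] using Real.Gamma_one_half_eq
    simp [h, pow_mul √π 2 2, Real.sq_sqrt pi_pos.le]
  | one =>
    have h : gaussianAbsMoment 1 = 2 := by norm_num [gaussianAbsMoment_eq_Gamma]
    have hpi : (3 : ℝ) ^ 2 ≤ π ^ 2 := pow_le_pow_left₀ (by norm_num) pi_gt_three.le 2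
    norm_num [h, mul_pow]
    linarith
  | more n ih _ =>
    have hstep : ((n : ℝ) + 1) * (n + 3) ≤ (n + 2) ^ 2 := by linarith
    calc gaussianAbsMoment (n + 2) ^ 4 * ((n + 2 : ℕ) + 1)
        = 2 ^ 4 * (n + 1) ^ 2 * (gaussianAbsMoment n ^ 4 * (n + 1)) * ((n + 1) * (n + 3)) := by
          rw [gaussianAbsMoment_add_two]
          push_cast
          ring
      _ ≤ 2 ^ 4 * (n + 1) ^ 2 * (π * 2 ^ n * n.factorial) ^ 2 * (n + 2) ^ 2 := by gcongr
      _ = (π * 2 ^ (n + 2) * (n + 2).factorial) ^ 2 := by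
          rw [Nat.factorial_succ, Nat.factorial_succ]
          push_cast
          ring

lemma gaussianAbsMoment_le (n : ℕ) :
    gaussianAbsMoment n ≤
      √π * (√2 ^ n * √(n.factorial : ℝ) * ((n : ℝ) + 1) ^ (-(1 / 4 : ℝ))) := by
  have hroot : (((n : ℝ) + 1) ^ (-(1 / 4 : ℝ))) ^ 4 = ((n : ℝ) + 1)⁻¹ := by
    rw [← Real.rpow_natCast, ← Real.rpow_mul (by positivity), ← Real.rpow_neg_one]
    norm_num
  have hsqrt {a : ℝ} (ha : 0 ≤ a) : √a ^ 4 = a ^ 2 := by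
    rw [pow_mul √a 2 2, Real.sq_sqrt ha]
  refine le_of_pow_le_pow_left₀ four_ne_zero (by positivity) ?_
  calc gaussianAbsMoment n ^ 4
      ≤ (π * 2 ^ n * n.factorial) ^ 2 * ((n : ℝ) + 1)⁻¹ := by
        rw [← div_eq_mul_inv, le_div_iff₀ (by positivity)]
        exact gaussianAbsMoment_pow_four_mul_le n
    _ = (√π * (√2 ^ n * √(n.factorial : ℝ) * ((n : ℝ) + 1) ^ (-(1 / 4 : ℝ)))) ^ 4 := by
        rw [mul_pow √π, mul_pow (_ * _) (_ ^ _), mul_pow (√2 ^ n), hroot, hsqrt pi_pos.le,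
          pow_right_comm √2, hsqrt zero_le_two, pow_right_comm 2 2 n, hsqrt (by positivity)]
        ring

end GaussianMoments

section HermiteFourier

open scoped FourierTransform

/-- The function `Hₙ(z) e^{-z²} = (-1)ⁿ (d/dz)ⁿ e^{-z²}`, the Hermite polynomial with its Gaussian
weight. -/
def hermiteGaussian (n : ℕ) (z : ℝ) : ℝ := hPoly n z * Real.exp (-z ^ 2)

lemma hermiteGaussian_eq_iteratedDeriv (n : ℕ) (z : ℝ) :
    hermiteGaussian n z = (-1) ^ n * iteratedDeriv n (fun y ↦ Real.exp (-y ^ 2)) z := by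
  rw [hermiteGaussian, hPoly, Real.exp_neg]
  field_simp

/-- The integrand of the Fourier representation
`√π Hₙ(z) e^{-z²} = ∫ (2is)ⁿ e^{-s² - 2izs} ds`. -/
def hermiteIntegrand (n : ℕ) (z s : ℝ) : ℂ :=
  (2 * s * Complex.I) ^ n * Complex.exp (-s ^ 2 - 2 * z * s * Complex.I)

lemma norm_hermiteIntegrand (n : ℕ) (z s : ℝ) :
    ‖hermiteIntegrand n z s‖ = |2 * s| ^ n * Real.exp (-s ^ 2) := by
  rw [hermiteIntegrand, norm_mul, Complex.norm_exp, norm_pow]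
  simp [← Complex.ofReal_pow, abs_mul]

lemma integrable_hermiteIntegrand (n : ℕ) (z : ℝ) : Integrable (hermiteIntegrand n z) := by
  refine (integrable_abs_two_mul_pow_mul_exp_neg_sq n).mono' ?_
    (Eventually.of_forall fun s ↦ (norm_hermiteIntegrand n z s).le)
  unfold hermiteIntegrand
  exact Continuous.aestronglyMeasurable (by fun_prop)

lemma fourier_exp_neg_sq_pi_mul (z : ℝ) :
    𝓕 (fun v : ℝ ↦ (Real.exp (-(π * v) ^ 2) : ℂ)) z = ((√π)⁻¹ * Real.exp (-z ^ 2) : ℝ) := by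
  have h := congrFun (fourier_gaussian_pi (b := π) (by simpa using pi_pos)) z
  convert h using 2
  · ext v
    push_cast
    ring_nf
  · push_cast [Real.sqrt_eq_rpow, Complex.ofReal_cpow pi_pos.le]
    field_simp

lemma iteratedDeriv_ofReal_comp {g : ℝ → ℝ} {n : ℕ} {z : ℝ} (hg : ContDiffAt ℝ n g z) :
    iteratedDeriv n (fun y ↦ (g y : ℂ)) z = (iteratedDeriv n g z : ℝ) :=
  congrArg (fun L ↦ L fun _ ↦ (1 : ℝ)) (Complex.ofRealCLM.iteratedFDeriv_comp_left hg le_rfl)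

lemma integrable_pow_smul_exp_neg_sq_pi_mul (n : ℕ) :
    Integrable fun v : ℝ ↦ v ^ n • (Real.exp (-(π * v) ^ 2) : ℂ) := by
  have h := (integrable_rpow_mul_exp_neg_mul_sq (sq_pos_of_pos pi_pos) (s := n)
    (neg_one_lt_zero.trans_le n.cast_nonneg)).ofReal (𝕜 := ℂ)
  simpa [mul_pow, Real.rpow_natCast] using h

lemma integral_hermiteIntegrand (n : ℕ) (z : ℝ) :
    ∫ s, hermiteIntegrand n z s = (√π * hermiteGaussian n z : ℝ) := by
  set g : ℝ → ℂ := fun v ↦ Real.exp (-(π * v) ^ 2) with hg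
  have hwave (v : ℝ) : hermiteIntegrand n z (π * v) = (-1) ^ n *
      (Complex.exp (↑(-2 * π * v * z) * Complex.I) • (-2 * π * Complex.I * v) ^ n • g v) := by
    simp only [hermiteIntegrand, hg, smul_eq_mul, Complex.ofReal_exp]
    rw [mul_left_comm _ _ (Complex.exp _), ← Complex.exp_add, ← mul_assoc, ← mul_pow]
    push_cast
    ring_nf
  have hderiv : iteratedDeriv n (𝓕 g) z =
      ((√π)⁻¹ * iteratedDeriv n (fun y ↦ Real.exp (-y ^ 2)) z : ℝ) := by
    rw [funext fourier_exp_neg_sq_pi_mul, iteratedDeriv_ofReal_comp (by fun_prop),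
      iteratedDeriv_const_mul_field]
  have hscale : ∫ s, hermiteIntegrand n z s = π * ∫ v : ℝ, hermiteIntegrand n z (π * v) := by
    rw [Measure.integral_comp_mul_left, abs_of_pos (inv_pos.mpr pi_pos), Complex.real_smul]
    push_cast
    field_simp
  rw [hscale, funext hwave, integral_const_mul, ← fourier_real_eq_integral_exp_smul,
    ← Real.iteratedDeriv_fourier (N := ⊤) (fun n _ ↦ integrable_pow_smul_exp_neg_sq_pi_mul n)
      le_top, hderiv, hermiteGaussian_eq_iteratedDeriv]
  have hpi : (π : ℂ) = √π * √π := by rw [← Complex.ofReal_mul, Real.mul_self_sqrt pi_pos.le]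
  rw [hpi]
  push_cast
  field_simp

end HermiteFourier

section IntegralExpansion

variable {X A B E : Type*} [MeasurableSpace X] {μ : Measure X}
  [NormedAddCommGroup E] [NormedSpace ℝ E]

lemma norm_integral_sub_sum_integral_le {S : Finset A} {T : Finset B}
    {F : X → E} {G : A → X → E} {H : B → X → ℝ} (hF : Integrable F μ)
    (hG : ∀ a ∈ S, Integrable (G a) μ) (hH : ∀ b ∈ T, Integrable (H b) μ)
    (hle : ∀ x, ‖F x - ∑ a ∈ S, G a x‖ ≤ ∑ b ∈ T, H b x) :
    ‖∫ x, F x ∂μ - ∑ a ∈ S, ∫ x, G a x ∂μ‖ ≤ ∑ b ∈ T, ∫ x, H b x ∂μ := by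
  rw [← integral_finsetSum S hG, ← integral_finsetSum T hH,
    ← integral_sub hF (integrable_finsetSum S hG)]
  exact norm_integral_le_of_norm_le (integrable_finsetSum T hH) (Eventually.of_forall hle)

lemma norm_integral_smul_sub_sum_le {S T : Finset A} {K : X → ℝ} {m : A → X → ℝ} {c C : A → ℝ}
    {f : X → E} (hK : Integrable (fun x ↦ K x • f x) μ)
    (hS : ∀ a ∈ S, Integrable (fun x ↦ m a x • f x) μ)
    (hT : ∀ a ∈ T, Integrable (fun x ↦ m a x • f x) μ)
    (hle : ∀ x, |K x - ∑ a ∈ S, c a * m a x| ≤ ∑ a ∈ T, C a * |m a x|) :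
    ‖∫ x, K x • f x ∂μ - ∑ a ∈ S, c a • ∫ x, m a x • f x ∂μ‖ ≤
      ∑ a ∈ T, C a * ∫ x, ‖m a x • f x‖ ∂μ := by
  simp only [← integral_smul, ← integral_const_mul]
  refine norm_integral_sub_sum_integral_le hK (fun a ha ↦ (hS a ha).smul (c a))
    (fun a ha ↦ (hT a ha).norm.const_mul (C a)) fun x ↦ ?_
  simp only [smul_smul, ← Finset.sum_smul, ← sub_smul, norm_smul, Real.norm_eq_abs, ← mul_assoc,
    ← Finset.sum_mul]
  exact mul_le_mul_of_nonneg_right (hle x) (norm_nonneg _)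

end IntegralExpansion

section GaussianTaylor

variable {ι : Type*} [Fintype ι]

lemma hermiteIntegrand_zero_sub (z w s : ℝ) :
    hermiteIntegrand 0 (z - w) s =
      hermiteIntegrand 0 z s * Complex.exp (2 * s * Complex.I * w) := by
  simp only [hermiteIntegrand, pow_zero, one_mul]
  rw [← Complex.exp_add]
  push_cast
  ring_nf

lemma hermiteIntegrand_mul_pow (n : ℕ) (z w s : ℝ) :
    hermiteIntegrand n z s * w ^ n =
      hermiteIntegrand 0 z s * (2 * s * Complex.I * w) ^ n := by
  simp only [hermiteIntegrand, pow_zero, one_mul, mul_pow _ (w : ℂ)]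
  ring

lemma integral_prod_hermiteIntegrand_mul (α : ι → ℕ) (z c : ι → ℝ) :
    ∫ s : ι → ℝ, ∏ i, hermiteIntegrand (α i) (z i) (s i) * (c i : ℂ) =
      (√π ^ Fintype.card ι * ∏ i, hermiteGaussian (α i) (z i) * c i : ℝ) := by
  rw [integral_fintype_prod_volume_eq_prod fun i s ↦ hermiteIntegrand (α i) (z i) s * (c i : ℂ)]
  simp only [integral_mul_const, integral_hermiteIntegrand, ← Complex.ofReal_mul,
    ← Complex.ofReal_prod, mul_assoc, Finset.prod_mul_distrib, Finset.prod_const, Finset.card_univ]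

lemma integral_prod_abs_two_mul_pow_mul (α : ι → ℕ) (c : ι → ℝ) :
    ∫ s : ι → ℝ, ∏ i, |2 * s i| ^ α i * Real.exp (-s i ^ 2) * c i =
      ∏ i, gaussianAbsMoment (α i) * c i := by
  rw [integral_fintype_prod_volume_eq_prod fun i s ↦ |2 * s| ^ α i * Real.exp (-s ^ 2) * c i]
  simp only [integral_mul_const, gaussianAbsMoment]

variable [DecidableEq ι]

lemma prod_hermiteIntegrand_zero_sub_sum (k : ℕ) (z w s : ι → ℝ) :
    ∏ i, hermiteIntegrand 0 (z i - w i) (s i) - ∑ α ∈ multiIndicesLE ι k,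
        ∏ i, hermiteIntegrand (α i) (z i) (s i) * (w i ^ α i / (α i).factorial) =
      (∏ i, hermiteIntegrand 0 (z i) (s i)) *
        (Complex.exp (∑ i, 2 * s i * Complex.I * w i) -
          ∑ j ∈ Finset.range (k + 1), (∑ i, 2 * s i * Complex.I * w i) ^ j / j.factorial) := by
  simp only [← mul_div_assoc, hermiteIntegrand_mul_pow]
  simp only [mul_div_assoc, hermiteIntegrand_zero_sub, Finset.prod_mul_distrib, ← Finset.mul_sum,
    ← Complex.exp_sum, sum_multiIndicesLE, sum_piAntidiag_prod_pow_div_factorial, mul_sub]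

lemma norm_prod_hermiteIntegrand_zero_sub_sum_le (k : ℕ) (z w s : ι → ℝ) :
    ‖∏ i, hermiteIntegrand 0 (z i - w i) (s i) - ∑ α ∈ multiIndicesLE ι k,
        ∏ i, hermiteIntegrand (α i) (z i) (s i) * (w i ^ α i / (α i).factorial)‖ ≤
      ∑ α ∈ Finset.piAntidiag Finset.univ (k + 1),
        ∏ i, |2 * s i| ^ α i * Real.exp (-s i ^ 2) * (|w i| ^ α i / (α i).factorial) := by
  have hre : (∑ i, 2 * (s i : ℂ) * Complex.I * w i).re ≤ 0 := by simp
  have hnorm : ‖∑ i, 2 * (s i : ℂ) * Complex.I * w i‖ ≤ ∑ i, |2 * s i| * |w i| :=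
    (norm_sum_le _ _).trans_eq (Finset.sum_congr rfl fun i _ ↦ by simp [abs_mul])
  rw [prod_hermiteIntegrand_zero_sub_sum, norm_mul, norm_prod]
  calc (∏ i, ‖hermiteIntegrand 0 (z i) (s i)‖) * ‖_‖
      ≤ (∏ i, ‖hermiteIntegrand 0 (z i) (s i)‖) *
          ((∑ i, |2 * s i| * |w i|) ^ (k + 1) / (k + 1).factorial) := by
        gcongr
        exact (norm_exp_sub_sum_le_of_re_nonpos (k + 1) hre).trans (by gcongr)
    _ = ∑ α ∈ Finset.piAntidiag Finset.univ (k + 1),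
          ∏ i, |2 * s i| ^ α i * Real.exp (-s i ^ 2) * (|w i| ^ α i / (α i).factorial) := by
        rw [← sum_piAntidiag_prod_pow_div_factorial, Finset.mul_sum]
        refine Finset.sum_congr rfl fun α _ ↦ ?_
        rw [← Finset.prod_mul_distrib]
        refine Finset.prod_congr rfl fun i _ ↦ ?_
        rw [norm_hermiteIntegrand, mul_pow]
        ring

lemma sqrt_pi_pow_mul_abs_sub_hermite_sum_le (k : ℕ) (z w : ι → ℝ) :
    √π ^ Fintype.card ι * |∏ i, Real.exp (-(z i - w i) ^ 2) - ∑ α ∈ multiIndicesLE ι k,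
        ∏ i, hermiteGaussian (α i) (z i) * (w i ^ α i / (α i).factorial)| ≤
      ∑ α ∈ Finset.piAntidiag Finset.univ (k + 1),
        ∏ i, gaussianAbsMoment (α i) * (|w i| ^ α i / (α i).factorial) := by
  have hshift : ∫ s : ι → ℝ, ∏ i, hermiteIntegrand 0 (z i - w i) (s i) =
      (√π ^ Fintype.card ι * ∏ i, Real.exp (-(z i - w i) ^ 2) : ℝ) := by
    simpa [hermiteGaussian, hPoly, ← Real.exp_add] using
      integral_prod_hermiteIntegrand_mul 0 (fun i ↦ z i - w i) 1
  have hmonomial (α : ι → ℕ) (i : ι) :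
      (w i ^ α i / (α i).factorial : ℂ) = (w i ^ α i / (α i).factorial : ℝ) := by
    push_cast
    rfl
  have hfourier := norm_integral_sub_sum_integral_le (μ := volume) (S := multiIndicesLE ι k)
    (T := Finset.piAntidiag Finset.univ (k + 1))
    (Integrable.fintype_prod fun i ↦ integrable_hermiteIntegrand 0 (z i - w i))
    (fun α _ ↦ Integrable.fintype_prod fun i ↦
      (integrable_hermiteIntegrand (α i) (z i)).mul_const _)
    (fun α _ ↦ Integrable.fintype_prod fun i ↦
      (integrable_abs_two_mul_pow_mul_exp_neg_sq (α i)).mul_const _)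
    (norm_prod_hermiteIntegrand_zero_sub_sum_le k z w)
  simpa only [hshift, hmonomial, integral_prod_hermiteIntegrand_mul,
    integral_prod_abs_two_mul_pow_mul, ← Complex.ofReal_sum, ← Complex.ofReal_sub,
    ← Finset.mul_sum, ← mul_sub, Complex.norm_real, norm_mul, norm_pow, Real.norm_eq_abs,
    abs_of_nonneg (Real.sqrt_nonneg π)] using hfourier

lemma abs_prod_exp_neg_sq_sub_hermite_sum_le (k : ℕ) (z w : ι → ℝ) :
    |∏ i, Real.exp (-(z i - w i) ^ 2) - ∑ α ∈ multiIndicesLE ι k,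
        ∏ i, hermiteGaussian (α i) (z i) * (w i ^ α i / (α i).factorial)| ≤
      ∑ α ∈ Finset.piAntidiag Finset.univ (k + 1),
        ∏ i, √2 ^ α i * ((α i : ℝ) + 1) ^ (-(1 / 4 : ℝ)) / √(α i).factorial * |w i| ^ α i := by
  refine le_of_mul_le_mul_left ((sqrt_pi_pow_mul_abs_sub_hermite_sum_le k z w).trans ?_)
    (show 0 < √π ^ Fintype.card ι by positivity)
  rw [Finset.mul_sum]
  refine Finset.sum_le_sum fun α _ ↦ ?_
  rw [← Finset.card_univ, ← Finset.prod_const, ← Finset.prod_mul_distrib]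
  refine Finset.prod_le_prod
    (fun i _ ↦ mul_nonneg (gaussianAbsMoment_nonneg _) (by positivity)) fun i _ ↦ ?_
  calc gaussianAbsMoment (α i) * (|w i| ^ α i / (α i).factorial)
      ≤ √π * (√2 ^ α i * √(α i).factorial * ((α i : ℝ) + 1) ^ (-(1 / 4 : ℝ))) *
          (|w i| ^ α i / (α i).factorial) := by
        gcongr
        exact gaussianAbsMoment_le (α i)
    _ = √π * (√2 ^ α i * ((α i : ℝ) + 1) ^ (-(1 / 4 : ℝ)) *
          (√(α i).factorial / (α i).factorial) * |w i| ^ α i) := by ring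
    _ = √π * (√2 ^ α i * ((α i : ℝ) + 1) ^ (-(1 / 4 : ℝ)) / √(α i).factorial * |w i| ^ α i) := by
        rw [Real.sqrt_div_self, ← div_eq_mul_inv]

end GaussianTaylor

section HeatKernel

lemma rpow_neg_natCast_add_div_two {a : ℝ} (ha : 0 < a) (n : ℕ) (r : ℝ) :
    a ^ (-((n : ℝ) + r) / 2) = a ^ (-r / 2) / √a ^ n := by
  rw [show -((n : ℝ) + r) / 2 = -r / 2 - n / 2 by ring, Real.rpow_sub ha,
    Real.rpow_div_two_eq_sqrt (n : ℝ) ha.le, Real.rpow_natCast]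

lemma prod_div_pow {ι : Type*} [Fintype ι] (a : ℝ) (y : ι → ℝ) (α : ι → ℕ) :
    ∏ i, (y i / a) ^ α i = (∏ i, y i ^ α i) / a ^ ∑ i, α i := by
  simp only [div_pow, Finset.prod_div_distrib, Finset.prod_pow_eq_pow_sum]

lemma sqrt_four_mul (t : ℝ) : √(4 * t) = 2 * √t := by
  rw [Real.sqrt_mul zero_le_four, show (4 : ℝ) = 2 ^ 2 by norm_num, Real.sqrt_sq zero_le_two]

variable {d : ℕ}

/-- The coefficient of `y ^ α` in the expansion of `G(x - y, t)` in powers of `y`. -/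
def heatHermiteCoeff (α : Fin d → ℕ) (x : EuclideanSpace ℝ (Fin d)) (t : ℝ) : ℝ :=
  π ^ (-(d : ℝ) / 2) * Real.exp (-‖x‖ ^ 2 / (4 * t)) *
    ((4 * t) ^ (-(((∑ i, α i : ℕ) : ℝ) + d) / 2) *
      (∏ i, hPoly (α i) (x i / (2 * √t))) / ∏ i, ((α i).factorial : ℝ))

/-- The factor of `|y ^ α|` in the bound for the remainder of the expansion of `G(x - y, t)`
in powers of `y`. -/
def heatRemainderCoeff (α : Fin d → ℕ) (t : ℝ) : ℝ :=
  (2 * π) ^ (-(d : ℝ) / 2) * (2 * t) ^ (-(((∑ i, α i : ℕ) : ℝ) + d) / 2) *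
    ((∏ i, ((α i : ℝ) + 1)) ^ (-(1 / 4 : ℝ)) / √(∏ i, ((α i).factorial : ℝ)))

lemma exp_neg_norm_sq_div (x : EuclideanSpace ℝ (Fin d)) {t : ℝ} (ht : 0 < t) :
    Real.exp (-‖x‖ ^ 2 / (4 * t)) = ∏ i, Real.exp (-(x i / (2 * √t)) ^ 2) := by
  rw [← Real.exp_sum, EuclideanSpace.real_norm_sq_eq, ← Finset.sum_neg_distrib, Finset.sum_div]
  congr! 2 with i
  rw [div_pow, mul_pow, Real.sq_sqrt ht.le]
  ring

lemma heatKernel_sub_eq_prod (x y : EuclideanSpace ℝ (Fin d)) {t : ℝ} (ht : 0 < t) :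
    heatKernel d (x - y) t = (4 * π * t) ^ (-(d : ℝ) / 2) *
      ∏ i, Real.exp (-(x i / (2 * √t) - y i / (2 * √t)) ^ 2) := by
  simp [heatKernel, exp_neg_norm_sq_div _ ht, sub_div]

lemma mul_prod_hermiteGaussian_eq_heatHermiteCoeff_mul (α : Fin d → ℕ)
    (x y : EuclideanSpace ℝ (Fin d)) {t : ℝ} (ht : 0 < t) :
    (4 * π * t) ^ (-(d : ℝ) / 2) * ∏ i, hermiteGaussian (α i) (x i / (2 * √t)) *
        ((y i / (2 * √t)) ^ α i / (α i).factorial) =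
      heatHermiteCoeff α x t * ∏ i, y i ^ α i := by
  have hconst : (4 * π * t) ^ (-(d : ℝ) / 2) =
      π ^ (-(d : ℝ) / 2) * (4 * t) ^ (-(d : ℝ) / 2) := by
    rw [← Real.mul_rpow pi_pos.le (by positivity)]
    ring_nf
  simp only [hermiteGaussian, heatHermiteCoeff, Finset.prod_mul_distrib, Finset.prod_div_distrib]
  rw [prod_div_pow, hconst, rpow_neg_natCast_add_div_two (by positivity), sqrt_four_mul,
    exp_neg_norm_sq_div x ht]
  ring

lemma mul_prod_eq_heatRemainderCoeff_mul (α : Fin d → ℕ) (y : EuclideanSpace ℝ (Fin d))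
    {t : ℝ} (ht : 0 < t) :
    (4 * π * t) ^ (-(d : ℝ) / 2) * ∏ i, √2 ^ α i * ((α i : ℝ) + 1) ^ (-(1 / 4 : ℝ)) /
        √(α i).factorial * |y i / (2 * √t)| ^ α i =
      heatRemainderCoeff α t * |∏ i, y i ^ α i| := by
  have hconst : (4 * π * t) ^ (-(d : ℝ) / 2) =
      (2 * π) ^ (-(d : ℝ) / 2) * (2 * t) ^ (-(d : ℝ) / 2) := by
    rw [← Real.mul_rpow (by positivity) (by positivity)]
    ring_nf
  have hscale (i : Fin d) : √2 * |y i / (2 * √t)| = |y i| / √(2 * t) := by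
    rw [abs_div, abs_of_pos (show 0 < 2 * √t by positivity), Real.sqrt_mul zero_le_two]
    field_simp
    rw [Real.sq_sqrt zero_le_two, mul_comm]
  have hfactor (i : Fin d) :
      √2 ^ α i * ((α i : ℝ) + 1) ^ (-(1 / 4 : ℝ)) / √(α i).factorial * |y i / (2 * √t)| ^ α i =
        (|y i| / √(2 * t)) ^ α i * (((α i : ℝ) + 1) ^ (-(1 / 4 : ℝ)) / √(α i).factorial) := by
    rw [← hscale, mul_pow]
    ring
  simp only [hfactor, Finset.prod_mul_distrib, Finset.prod_div_distrib, heatRemainderCoeff]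
  rw [prod_div_pow, hconst, rpow_neg_natCast_add_div_two (by positivity), Finset.abs_prod,
    Real.finsetProd_rpow _ _ fun i _ ↦ by positivity, Real.sqrt_prod _ fun i _ ↦ by positivity]
  simp only [abs_pow]
  ring

theorem abs_heatKernel_sub_sum_le (k : ℕ) (x y : EuclideanSpace ℝ (Fin d)) {t : ℝ} (ht : 0 < t) :
    |heatKernel d (x - y) t -
        ∑ α ∈ multiIndicesLE (Fin d) k, heatHermiteCoeff α x t * ∏ i, y i ^ α i| ≤
      ∑ α ∈ Finset.piAntidiag Finset.univ (k + 1),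
        heatRemainderCoeff α t * |∏ i, y i ^ α i| := by
  simp only [heatKernel_sub_eq_prod x y ht,
    ← mul_prod_hermiteGaussian_eq_heatHermiteCoeff_mul _ x y ht,
    ← mul_prod_eq_heatRemainderCoeff_mul _ y ht, ← Finset.mul_sum, ← mul_sub, abs_mul]
  rw [abs_of_pos (by positivity)]
  gcongr
  exact abs_prod_exp_neg_sq_sub_hermite_sum_le k _ _

end HeatKernel

section Moments

variable {ι E : Type*} [Fintype ι] [NormedAddCommGroup E] [NormedSpace ℝ E]
  {n : ℕ} {μ : Measure (EuclideanSpace ℝ ι)} {f : EuclideanSpace ℝ ι → E}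

lemma abs_prod_pow_le_norm_pow (y : EuclideanSpace ℝ ι) (α : ι → ℕ) :
    |∏ i, y i ^ α i| ≤ ‖y‖ ^ ∑ i, α i := by
  simp only [Finset.abs_prod, ← Finset.prod_pow_eq_pow_sum, abs_pow]
  gcongr with i
  exact PiLp.norm_apply_le y i

lemma pow_le_one_add_pow {r : ℝ} (hr : 0 ≤ r) {m : ℕ} (hmn : m ≤ n) : r ^ m ≤ 1 + r ^ n := by
  rcases le_total r 1 with h | h
  · exact (pow_le_one₀ hr h).trans (le_add_of_nonneg_right (pow_nonneg hr n))
  · exact (pow_le_pow_right₀ h hmn).trans (le_add_of_nonneg_left zero_le_one)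

lemma integrable_prod_pow_smul (hf : Integrable (fun y ↦ (1 + ‖y‖ ^ n) • f y) μ) {α : ι → ℕ}
    (hα : ∑ i, α i ≤ n) : Integrable (fun y ↦ (∏ i, y i ^ α i) • f y) μ := by
  have hpos (y : EuclideanSpace ℝ ι) : 0 < 1 + ‖y‖ ^ n := by positivity
  have hbdd := hf.bdd_smul (φ := fun y ↦ (∏ i, y i ^ α i) / (1 + ‖y‖ ^ n)) 1 ?_ ?_
  · refine hbdd.congr (Eventually.of_forall fun y ↦ ?_)
    simp only [Pi.smul_apply', smul_smul, div_mul_cancel₀ _ (hpos y).ne']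
  · exact (Continuous.div (by fun_prop) (by fun_prop) fun y ↦ (hpos y).ne').aestronglyMeasurable
  · refine Eventually.of_forall fun y ↦ ?_
    rw [norm_div, Real.norm_of_nonneg (hpos y).le, div_le_one (hpos y)]
    exact (abs_prod_pow_le_norm_pow y α).trans (pow_le_one_add_pow (norm_nonneg y) hα)

lemma integrable_heatKernel_sub_smul {d : ℕ} {μ : Measure (EuclideanSpace ℝ (Fin d))}
    {f : EuclideanSpace ℝ (Fin d) → E} (hf : Integrable f μ) (x : EuclideanSpace ℝ (Fin d))
    {t : ℝ} (ht : 0 < t) : Integrable (fun y ↦ heatKernel d (x - y) t • f y) μ := by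
  refine hf.bdd_smul ((4 * π * t) ^ (-(d : ℝ) / 2)) ?_ (Eventually.of_forall fun y ↦ ?_)
  · unfold heatKernel
    exact Continuous.aestronglyMeasurable (by fun_prop)
  · rw [heatKernel, Real.norm_of_nonneg (by positivity)]
    refine mul_le_of_le_one_right (by positivity) (Real.exp_le_one_iff.mpr ?_)
    exact div_nonpos_of_nonpos_of_nonneg (by simp) (by positivity)

end Moments

theorem stmt_5_general {E : Type*} [NormedAddCommGroup E] [NormedSpace ℝ E] [CompleteSpace E]
    {d k : ℕ} {μ : Measure (EuclideanSpace ℝ (Fin d))} {f : EuclideanSpace ℝ (Fin d) → E}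
    (hf : Integrable (fun y ↦ (1 + ‖y‖ ^ (k + 1)) • f y) μ) {t : ℝ} (ht : 0 < t)
    (x : EuclideanSpace ℝ (Fin d)) :
    ‖(∫ y, heatKernel d (x - y) t • f y ∂μ) -
        (π ^ (-(d : ℝ) / 2) * Real.exp (-‖x‖ ^ 2 / (4 * t))) •
          ∑ j ∈ Finset.range (k + 1), ∑ α ∈ Finset.Nat.antidiagonalTuple d j,
            ((4 * t) ^ (-(((∑ i, α i : ℕ) : ℝ) + d) / 2) *
              (∏ i, hPoly (α i) (x i / (2 * √t))) / ∏ i, ((α i).factorial : ℝ)) •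
                ∫ y, (∏ i, y i ^ α i) • f y ∂μ‖ ≤
      (2 * π) ^ (-(d : ℝ) / 2) * (2 * t) ^ (-((k : ℝ) + d + 1) / 2) *
        ∑ α ∈ Finset.Nat.antidiagonalTuple d (k + 1),
          ((∫ y, ‖(∏ i, y i ^ α i) • f y‖ ∂μ) / √(∏ i, ((α i).factorial : ℝ))) *
            (∏ i, ((α i : ℝ) + 1)) ^ (-(1 / 4 : ℝ)) := by
  have hmoment {α : Fin d → ℕ} := integrable_prod_pow_smul hf (α := α)
  have hf' : Integrable f μ := by simpa using hmoment (α := 0) (by simp)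
  have h := norm_integral_smul_sub_sum_le (integrable_heatKernel_sub_smul hf' x ht)
    (fun α hα ↦ hmoment ((mem_multiIndicesLE.mp hα).trans k.le_succ))
    (fun α hα ↦ hmoment (Finset.mem_piAntidiag.mp hα).1.le)
    (fun y ↦ abs_heatKernel_sub_sum_le k x y ht)
  simp only [sum_multiIndicesLE, Finset.piAntidiag_univ_fin_eq_antidiagonalTuple, heatHermiteCoeff,
    mul_smul, ← Finset.smul_sum] at h ⊢
  refine h.trans_eq ?_
  rw [Finset.mul_sum]
  refine Finset.sum_congr rfl fun α hα ↦ ?_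
  rw [heatRemainderCoeff, Finset.Nat.mem_antidiagonalTuple.mp hα]
  push_cast
  ring_nf

/-- the Hermite polynomial approximation with its `L^∞` error estimate. -/
theorem stmt_5 (d k : ℕ) (hd : 1 ≤ d) (u₀ : EuclideanSpace ℝ (Fin d) → ℝ)
    (hint : Integrable (fun x => u₀ x * (1 + ‖x‖ ^ (k + 1))))
    (t : ℝ) (ht : 0 < t) (x : EuclideanSpace ℝ (Fin d)) :
    |(∫ y, heatKernel d (x - y) t * u₀ y) -
        π ^ (-(d : ℝ) / 2) * Real.exp (-‖x‖ ^ 2 / (4 * t)) *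
          ∑ j ∈ Finset.range (k + 1), ∑ α ∈ Finset.Nat.antidiagonalTuple d j,
            ((∫ y, (∏ i, y i ^ α i) * u₀ y) / ∏ i, ((α i).factorial : ℝ)) *
              (4 * t) ^ (-(((∑ i, α i : ℕ) : ℝ) + d) / 2) *
              ∏ i, hPoly (α i) (x i / (2 * Real.sqrt t))| ≤
      (2 * π) ^ (-(d : ℝ) / 2) * (2 * t) ^ (-((k : ℝ) + d + 1) / 2) *
        ∑ α ∈ Finset.Nat.antidiagonalTuple d (k + 1),
          ((∫ y, |(∏ i, y i ^ α i) * u₀ y|) / Real.sqrt (∏ i, ((α i).factorial : ℝ))) *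
            (∏ i, ((α i : ℝ) + 1)) ^ (-(1 / 12 : ℝ)) := by
  have h := stmt_5_general (μ := volume) (f := u₀) (by simpa [mul_comm] using hint) ht x
  simp only [smul_eq_mul, Real.norm_eq_abs] at h
  simp only [div_mul_eq_mul_div, mul_assoc, mul_comm (∫ y, (∏ i, y i ^ _) * u₀ y)] at h ⊢
  refine h.trans ?_
  gcongr with α
  · exact Finset.one_le_prod fun i _ ↦ le_add_of_nonneg_left (α i).cast_nonneg
  · norm_num

end
end
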